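/- arXiv:2401.11251 — 3 statements merged into one kernel-verified Lean document; each statement's English description precedes it below -/
import Mathlib

section
/- Let 𝓜=(M^{(λ)})_{λ>0} and 𝓝=(N^{(λ)})_{λ>0} be weight matrices. If 𝓜{⪯}𝓝, then S_{{𝓜}}(ℝ^d) ⊆ S_{{𝓝}}(ℝ^d) for every dimension d∈ℕ. Conversely, if 𝓜 is standard log-convex and Roumieu non-quasianalytic (i.e. there exists λ₀>0 such that ∑_{p≥1} M^{(λ₀)}_{p−1}/M^{(λ₀)}_p < ∞) and S_{{𝓜}}(ℝ) ⊆ S_{{𝓝}}(ℝ) (dimension d=1), then 𝓜{⪯}𝓝. -/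
/-!
The inclusion under `𝓜{⪯}𝓝` is immediate from the defining estimates. For the converse, a single
function detects the growth of a log-convex sequence `M`. With the increasing quotients
`q_k = M_{k+1} / M_k` and the Gaussian `g(x) = exp (-x² / 2)`, it is
`f(x) = ∑_k 2^{-k} (M_k / q_k^k) g(x - q_k)`.

* Lower bound: all summands are positive, and at `x = q_p` the `p`-th one alone gives
  `x^p f(x) ≥ 2^{-p} M_p` (`testFun_lower`). Hence `f ∈ S_{{N}}` forces `M ⪯ N`.
* Upper bound: log-convexity gives `(M_k / q_k^k) q_k^j ≤ M_j` for all `j, k` (`mul_quot_pow_le`),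
  and `|x^a g^{(n)}(x)| ≤ e^{1/2} 2^n (a + n)!` (`pow_mul_iteratedDeriv_gauss_le`). Expanding
  `|x|^a ≤ 2^a (q_k^a + |x - q_k|^a)` in each summand and using `M_j M_k ≤ M_{j+k}`, one gets
  `f ∈ S_{{M}}` as soon as `p! ≤ S^p M_p` for some `S` (`testFun_mem`).

Non-quasianalyticity enters only through this last condition: the terms `1 / q_p` of the convergent
series decrease, so `q_p ≥ (p + 1) / S` and `M_p ≥ p! / S^p` (`factorial_le_of_nonQA`). The condition
passes from `M^{(λ₀)}` to every larger index, and for an index `λ` below `λ₀` it suffices to compare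
with `max λ λ₀`.
-/
open Filter Asymptotics

noncomputable section

/-- Partial derivative operator in coordinate `i`. -/
def pderivOp {d : ℕ} (i : Fin d) (f : (Fin d → ℝ) → ℝ) : (Fin d → ℝ) → ℝ :=
  fun x => fderiv ℝ f x (Pi.single i 1)

/-- Iterated partial derivative `∂^β f` for a multi-index `β`. -/
def mderiv {d : ℕ} (β : Fin d → ℕ) (f : (Fin d → ℝ) → ℝ) : (Fin d → ℝ) → ℝ :=
  (List.finRange d).foldr (fun i g => (pderivOp i)^[β i] g) f

/-- The monomial `x^α` for a multi-index `α`. -/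
def mpow {d : ℕ} (x : Fin d → ℝ) (α : Fin d → ℕ) : ℝ := ∏ i, x i ^ α i

/-- The length `|α| = α 0 + ⋯ + α (d-1)` of a multi-index. -/
def msize {d : ℕ} (α : Fin d → ℕ) : ℕ := ∑ i, α i

/-- Young conjugate `φ*_ω(s) = sup_{t ≥ 0} (s·t − ω(e^t))`. -/
def youngConj (ω : ℝ → ℝ) (s : ℝ) : ℝ :=
  sSup {y : ℝ | ∃ t : ℝ, 0 ≤ t ∧ y = s * t - ω (Real.exp t)}

/-- A general weight function: continuous, increasing, `ω:[0,∞)→[0,∞)`, with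
conditions (α), (γ), (δ) (condition (β) is not required). -/
structure IsGenWeightFun (ω : ℝ → ℝ) : Prop where
  nonneg : ∀ t, 0 ≤ t → 0 ≤ ω t
  continuous : ContinuousOn ω (Set.Ici 0)
  mono : MonotoneOn ω (Set.Ici 0)
  alpha : ∃ L : ℝ, 1 ≤ L ∧ ∀ t, 0 ≤ t → ω (2 * t) ≤ L * (ω t + 1)
  gamma : Real.log =o[Filter.atTop] ω
  delta : ConvexOn ℝ (Set.Ici 0) fun t => ω (Real.exp t)

/-- A weight function: a general weight function which moreover satisfies
(β): `ω(t) = O(t²)` as `t → ∞`. -/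
structure IsWeightFun (ω : ℝ → ℝ) extends IsGenWeightFun ω : Prop where
  beta : ω =O[Filter.atTop] fun t : ℝ => t ^ 2

/-- The weight `exp((1/l)·φ*_ω(l·k))`. -/
def wWeight (ω : ℝ → ℝ) (l : ℝ) (k : ℕ) : ℝ :=
  Real.exp (1 / l * youngConj ω (l * (k : ℝ)))

/-- Roumieu Gelfand–Shilov class `S_{{ω}}(ℝ^d)`. -/
def SRoumieuW (ω : ℝ → ℝ) (d : ℕ) : Set ((Fin d → ℝ) → ℝ) :=
  {f | ContDiff ℝ (⊤ : ℕ∞) f ∧ ∃ l > 0, ∃ C > 0, ∀ α β : Fin d → ℕ, ∀ x : Fin d → ℝ,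
    |mpow x α * mderiv β f x| ≤ C * wWeight ω l (msize α + msize β)}

/-- Beurling Gelfand–Shilov class `S_{(ω)}(ℝ^d)`. -/
def SBeurlingW (ω : ℝ → ℝ) (d : ℕ) : Set ((Fin d → ℝ) → ℝ) :=
  {f | ContDiff ℝ (⊤ : ℕ∞) f ∧ ∀ l > 0, ∃ C > 0, ∀ α β : Fin d → ℕ, ∀ x : Fin d → ℝ,
    |mpow x α * mderiv β f x| ≤ C * wWeight ω l (msize α + msize β)}

/-- Continuity of the inclusion `S_(ω)(ℝ^d) ⊆ S_(σ)(ℝ^d)`: for every `μ > 0` there are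
`ν > 0` and `C ≥ 1` with `q_{σ,μ}(f) ≤ C · q_{ω,ν}(f)` for all `f ∈ S_(ω)(ℝ^d)`,
expressed via bounding constants. -/
def contIncBW (ω σ : ℝ → ℝ) (d : ℕ) : Prop :=
  ∀ μ > 0, ∃ ν > 0, ∃ C : ℝ, 1 ≤ C ∧ ∀ f ∈ SBeurlingW ω d, ∀ D : ℝ, 0 ≤ D →
    (∀ α β : Fin d → ℕ, ∀ x : Fin d → ℝ,
      |mpow x α * mderiv β f x| ≤ D * wWeight ω ν (msize α + msize β)) →
    (∀ α β : Fin d → ℕ, ∀ x : Fin d → ℝ,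
      |mpow x α * mderiv β f x| ≤ C * D * wWeight σ μ (msize α + msize β))

/-- `M ∈ LC`: normalized, log-convex, with `M_p^{1/p} → ∞`. -/
structure IsLC (M : ℕ → ℝ) : Prop where
  pos : ∀ p, 0 < M p
  norm0 : M 0 = 1
  norm1 : 1 ≤ M 1
  logConvex : ∀ p : ℕ, M (p + 1) ^ 2 ≤ M p * M (p + 2)
  root_tendsto : Filter.Tendsto (fun p : ℕ => M p ^ (1 / (p : ℝ))) Filter.atTop Filter.atTop

/-- `M ⪯ N`: `∃ C ≥ 1, ∀ p, M_p ≤ C^p N_p`. -/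
def seqPreceq (M N : ℕ → ℝ) : Prop := ∃ C : ℝ, 1 ≤ C ∧ ∀ p : ℕ, M p ≤ C ^ p * N p

/-- `M ◁ N`: `(M_p/N_p)^{1/p} → 0`. -/
def seqLtriangle (M N : ℕ → ℝ) : Prop :=
  Filter.Tendsto (fun p : ℕ => (M p / N p) ^ (1 / (p : ℝ))) Filter.atTop (nhds 0)

/-- `‖f‖_{∞,M,h} ≤ C`, expressed pointwise. -/
def seqBound {d : ℕ} (M : ℕ → ℝ) (h C : ℝ) (f : (Fin d → ℝ) → ℝ) : Prop :=
  ∀ α β : Fin d → ℕ, ∀ x : Fin d → ℝ,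
    |mpow x α * mderiv β f x| ≤ C * h ^ (msize α + msize β) * M (msize α + msize β)

/-- Roumieu class `S_{{M}}(ℝ^d)` for a single weight sequence. -/
def SRoumieuSeq (M : ℕ → ℝ) (d : ℕ) : Set ((Fin d → ℝ) → ℝ) :=
  {f | ContDiff ℝ (⊤ : ℕ∞) f ∧ ∃ C > 0, ∃ h > 0, seqBound M h C f}

/-- Beurling class `S_(M)(ℝ^d)` for a single weight sequence. -/
def SBeurlingSeq (M : ℕ → ℝ) (d : ℕ) : Set ((Fin d → ℝ) → ℝ) :=
  {f | ContDiff ℝ (⊤ : ℕ∞) f ∧ ∀ h > 0, ∃ C > 0, seqBound M h C f}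

/-- Moderate growth (M2). -/
def condM2 (M : ℕ → ℝ) : Prop := ∃ C : ℝ, 1 ≤ C ∧ ∀ p q : ℕ, M (p + q) ≤ C ^ (p + q) * M p * M q

/-- Derivation closedness (M2'). -/
def condM2' (M : ℕ → ℝ) : Prop := ∃ D : ℝ, 1 ≤ D ∧ ∀ p : ℕ, M (p + 1) ≤ D ^ (p + 1) * M p

/-- Condition (12L2R) for a single sequence. -/
def cond12L2Rseq (M : ℕ → ℝ) : Prop :=
  ∃ B > 0, ∃ C > 0, ∃ H > 0, ∀ p q : ℕ,
    (p : ℝ) ^ ((p : ℝ) / 2) * M q ≤ B * C ^ p * H ^ (p + q) * M (p + q)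

/-- Condition (12L2B) for a single sequence. -/
def cond12L2Bseq (M : ℕ → ℝ) : Prop :=
  ∃ H > 0, ∀ C > 0, ∃ B > 0, ∀ p q : ℕ,
    (p : ℝ) ^ ((p : ℝ) / 2) * M q ≤ B * C ^ p * H ^ (p + q) * M (p + q)

/-- Non-quasianalyticity of a weight sequence: `∑ M_{p-1}/M_p < ∞`. -/
def nonQA (M : ℕ → ℝ) : Prop := Summable fun p : ℕ => M p / M (p + 1)

/-- Continuity of the inclusion `S_(M)(ℝ^d) ⊆ S_(N)(ℝ^d)` for single sequences. -/
def contIncBSeq (M N : ℕ → ℝ) (d : ℕ) : Prop :=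
  ∀ h > 0, ∃ h' > 0, ∃ C : ℝ, 1 ≤ C ∧ ∀ f ∈ SBeurlingSeq M d, ∀ D : ℝ, 0 ≤ D →
    seqBound M h' D f → seqBound N h (C * D) f

/-- A weight matrix: positive normalized sequences, pointwise nondecreasing in the index. -/
def IsWeightMatrix (M : ℝ → ℕ → ℝ) : Prop :=
  (∀ l, 0 < l → (∀ p, 0 < M l p) ∧ M l 0 = 1) ∧
    ∀ l k, 0 < l → l ≤ k → ∀ p, M l p ≤ M k p

/-- Standard log-convexity of a weight matrix. -/
def StdLogConvex (M : ℝ → ℕ → ℝ) : Prop := ∀ l, 0 < l → IsLC (M l)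

/-- Roumieu class `S_{{𝓜}}(ℝ^d)` for a weight matrix. -/
def SRoumieuMat (M : ℝ → ℕ → ℝ) (d : ℕ) : Set ((Fin d → ℝ) → ℝ) :=
  {f | ∃ l > 0, f ∈ SRoumieuSeq (M l) d}

/-- Beurling class `S_(𝓜)(ℝ^d)` for a weight matrix. -/
def SBeurlingMat (M : ℝ → ℕ → ℝ) (d : ℕ) : Set ((Fin d → ℝ) → ℝ) :=
  {f | ∀ l > 0, f ∈ SBeurlingSeq (M l) d}

/-- `𝓜{⪯}𝓝`. -/
def matPreceqR (M N : ℝ → ℕ → ℝ) : Prop := ∀ l > 0, ∃ k > 0, seqPreceq (M l) (N k)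

/-- `𝓜(⪯)𝓝`. -/
def matPreceqB (M N : ℝ → ℕ → ℝ) : Prop := ∀ l > 0, ∃ k > 0, seqPreceq (M k) (N l)

/-- `𝓜 ◁ 𝓝`. -/
def matLtriangle (M N : ℝ → ℕ → ℝ) : Prop := ∀ l > 0, ∀ k > 0, seqLtriangle (M l) (N k)

/-- Condition (12L2R) for a weight matrix (Roumieu). -/
def cond12L2RMat (M : ℝ → ℕ → ℝ) : Prop :=
  ∀ l > 0, ∃ k, l ≤ k ∧ ∃ B > 0, ∃ C > 0, ∃ H > 0, ∀ p q : ℕ,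
    (p : ℝ) ^ ((p : ℝ) / 2) * M l q ≤ B * C ^ p * H ^ (p + q) * M k (p + q)

/-- Condition (M2')_R for a weight matrix (Roumieu). -/
def condM2'RMat (M : ℝ → ℕ → ℝ) : Prop :=
  ∀ l > 0, ∃ k, l ≤ k ∧ ∃ A : ℝ, 1 ≤ A ∧ ∀ p : ℕ, M l (p + 1) ≤ A ^ (p + 1) * M k p

/-- Condition (12L2B) for a weight matrix (Beurling). -/
def cond12L2BMat (M : ℝ → ℕ → ℝ) : Prop :=
  ∀ l > 0, ∃ k, 0 < k ∧ k ≤ l ∧ ∃ H > 0, ∀ C > 0, ∃ B > 0, ∀ p q : ℕ,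
    (p : ℝ) ^ ((p : ℝ) / 2) * M k q ≤ B * C ^ p * H ^ (p + q) * M l (p + q)

/-- Condition (M2')_B for a weight matrix (Beurling). -/
def condM2'BMat (M : ℝ → ℕ → ℝ) : Prop :=
  ∀ l > 0, ∃ k, 0 < k ∧ k ≤ l ∧ ∃ A : ℝ, 1 ≤ A ∧ ∀ p : ℕ, M k (p + 1) ≤ A ^ (p + 1) * M l p

/-- Continuity of the inclusion `S_(𝓜)(ℝ^d) ⊆ S_(𝓝)(ℝ^d)` for weight matrices. -/
def contIncBMat (M N : ℝ → ℕ → ℝ) (d : ℕ) : Prop :=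
  ∀ l > 0, ∀ h > 0, ∃ k > 0, ∃ h' > 0, ∃ C : ℝ, 1 ≤ C ∧
    ∀ f ∈ SBeurlingMat M d, ∀ D : ℝ, 0 ≤ D →
      seqBound (M k) h' D f → seqBound (N l) h (C * D) f

/-- Associated function `ω_M(t) = sup_p log(t^p / M_p)`. -/
def assocFun (M : ℕ → ℝ) (t : ℝ) : ℝ :=
  sSup {y : ℝ | ∃ p : ℕ, y = Real.log (t ^ p / M p)}

/-- Condition (α) for a function. -/
def condAlpha (ω : ℝ → ℝ) : Prop := ∃ L : ℝ, 1 ≤ L ∧ ∀ t, 0 ≤ t → ω (2 * t) ≤ L * (ω t + 1)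

/-- Condition (ω6): `∃ H ≥ 1, ∀ t ≥ 0, 2ω(t) ≤ ω(Ht) + H`. -/
def condOmega6 (ω : ℝ → ℝ) : Prop := ∃ H : ℝ, 1 ≤ H ∧ ∀ t, 0 ≤ t → 2 * ω t ≤ ω (H * t) + H

/-- The sequence `W^{(λ)}_p = exp((1/λ)φ*_ω(λ p))`. -/
def wSeq (ω : ℝ → ℝ) (l : ℝ) (p : ℕ) : ℝ := Real.exp (1 / l * youngConj ω (l * (p : ℝ)))

end

/-! ### The Gaussian -/

/-- The Gaussian `x ↦ exp (-x² / 2)`. -/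
noncomputable def gauss (x : ℝ) : ℝ := Real.exp (-(x ^ 2 / 2))

theorem contDiff_gauss {n : WithTop ℕ∞} : ContDiff ℝ n gauss := by
  unfold gauss; fun_prop

theorem deriv_gauss : deriv gauss = fun x => -x * gauss x := by
  funext x
  have h : HasDerivAt gauss (Real.exp (-(x ^ 2 / 2)) * -((2 : ℕ) * x ^ (2 - 1) / 2)) x :=
    (((hasDerivAt_pow 2 x).div_const 2).neg).exp
  rw [h.deriv]
  simp [gauss]
  ring

theorem differentiable_iteratedDeriv_gauss (n : ℕ) : Differentiable ℝ (iteratedDeriv n gauss) :=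
  (contDiff_gauss (n := ⊤)).differentiable_iteratedDeriv n (by exact_mod_cast WithTop.coe_lt_top _)

/-- The Hermite recurrence, for the derivatives of the Gaussian instead of the polynomials. -/
theorem iteratedDeriv_gauss_succ_succ (n : ℕ) (x : ℝ) :
    iteratedDeriv (n + 2) gauss x =
      -x * iteratedDeriv (n + 1) gauss x - (n + 1) * iteratedDeriv n gauss x := by
  induction n generalizing x with
  | zero =>
    have h1 : iteratedDeriv 1 gauss = fun x => -x * gauss x := by
      rw [iteratedDeriv_one, deriv_gauss]
    have hg : HasDerivAt gauss (-x * gauss x) x := by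
      have := ((contDiff_gauss (n := 1)).differentiable (by simp) x).hasDerivAt
      rwa [deriv_gauss] at this
    have h2 : deriv (fun x => -x * gauss x) x = -1 * gauss x + -x * (-x * gauss x) :=
      ((hasDerivAt_id x).neg.mul hg).deriv
    rw [iteratedDeriv_succ, h1, h2]
    simp
    ring
  | succ n ih =>
    have hd : ∀ k, HasDerivAt (iteratedDeriv k gauss) (iteratedDeriv (k + 1) gauss x) x := by
      intro k
      rw [iteratedDeriv_succ]
      exact (differentiable_iteratedDeriv_gauss k x).hasDerivAt
    have h2 : deriv (fun x => -x * iteratedDeriv (n + 1) gauss x -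
        (n + 1) * iteratedDeriv n gauss x) x = -1 * iteratedDeriv (n + 1) gauss x +
          -x * iteratedDeriv (n + 2) gauss x - (n + 1) * iteratedDeriv (n + 1) gauss x :=
      (((hasDerivAt_id x).neg.mul (hd (n + 1))).sub ((hd n).const_mul ((n : ℝ) + 1))).deriv
    rw [iteratedDeriv_succ, funext ih, h2, ih x]
    push_cast
    ring

theorem pow_mul_gauss_le (a : ℕ) (x : ℝ) :
    |x| ^ a * gauss x ≤ Real.exp (1 / 2) * a.factorial := by
  have h1 := Real.pow_div_factorial_le_exp |x| (abs_nonneg x) a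
  have hf : (0 : ℝ) < a.factorial := by exact_mod_cast a.factorial_pos
  rw [div_le_iff₀ hf] at h1
  have h2 : Real.exp |x| * gauss x ≤ Real.exp (1 / 2) := by
    rw [gauss, ← Real.exp_add]
    apply Real.exp_le_exp.2
    nlinarith [sq_nonneg (|x| - 1), sq_abs x]
  calc |x| ^ a * gauss x ≤ (Real.exp |x| * a.factorial) * gauss x := by
        gcongr; exact (Real.exp_pos _).le
    _ = (Real.exp |x| * gauss x) * a.factorial := by ring
    _ ≤ _ := by gcongr

/-- The Gaussian lies in the Gelfand–Shilov class of the sequence `p!`. The recurrence trades one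
derivative for one power of `x`, whence no growth in `a` beyond the factorial. -/
theorem pow_mul_iteratedDeriv_gauss_le (n a : ℕ) (x : ℝ) :
    |x| ^ a * |iteratedDeriv n gauss x| ≤ Real.exp (1 / 2) * 2 ^ n * (a + n).factorial := by
  have key : ∀ n : ℕ, (∀ a : ℕ, |x| ^ a * |iteratedDeriv n gauss x| ≤
        Real.exp (1 / 2) * 2 ^ n * (a + n).factorial) ∧
      (∀ a : ℕ, |x| ^ a * |iteratedDeriv (n + 1) gauss x| ≤
        Real.exp (1 / 2) * 2 ^ (n + 1) * (a + (n + 1)).factorial) := by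
    intro n
    induction n with
    | zero =>
      have hpos : 0 < gauss x := Real.exp_pos _
      constructor
      · intro a
        simpa [abs_of_pos hpos] using pow_mul_gauss_le a x
      · intro a
        have h := pow_mul_gauss_le (a + 1) x
        have h0 : 0 ≤ Real.exp (1 / 2) * ((a + 1).factorial : ℝ) := by positivity
        simp only [zero_add, iteratedDeriv_one, deriv_gauss, abs_mul, abs_neg, abs_of_pos hpos,
          pow_one]
        calc _ = |x| ^ (a + 1) * gauss x := by ring
          _ ≤ _ := h
          _ ≤ _ := by linarith
    | succ n ih =>
      refine ⟨ih.2, fun a => ?_⟩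
      rw [iteratedDeriv_gauss_succ_succ]
      have h1 := ih.2 (a + 1)
      have h2 := ih.1 a
      have h3 : |-x * iteratedDeriv (n + 1) gauss x - (n + 1) * iteratedDeriv n gauss x| ≤
          |x| * |iteratedDeriv (n + 1) gauss x| + (n + 1) * |iteratedDeriv n gauss x| := by
        refine (abs_sub _ _).trans (le_of_eq ?_)
        rw [abs_mul, abs_mul, abs_neg, abs_of_nonneg (by positivity : (0 : ℝ) ≤ n + 1)]
      have e1 : a + 1 + (n + 1) = a + n + 1 + 1 := by ring
      have e2 : a + (n + 1 + 1) = a + n + 1 + 1 := by ring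
      rw [e1] at h1
      rw [e2]
      have hf : ((n : ℝ) + 1) * (a + n).factorial ≤ ((a + n + 1 + 1).factorial : ℝ) := by
        have : (n + 1) * (a + n).factorial ≤ (a + n + 1 + 1).factorial := by
          calc (n + 1) * (a + n).factorial ≤ (a + n + 1) * (a + n).factorial := by
                gcongr; omega
            _ = (a + n + 1).factorial := (Nat.factorial_succ _).symm
            _ ≤ _ := Nat.factorial_le (by omega)
        exact_mod_cast this
      set F : ℝ := ((a + n + 1 + 1).factorial : ℝ) with hF
      have hF0 : 0 ≤ F := by positivity
      calc _ ≤ |x| ^ a * (|x| * |iteratedDeriv (n + 1) gauss x| +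
              (n + 1) * |iteratedDeriv n gauss x|) := by gcongr
        _ = |x| ^ (a + 1) * |iteratedDeriv (n + 1) gauss x| +
              (n + 1) * (|x| ^ a * |iteratedDeriv n gauss x|) := by ring
        _ ≤ Real.exp (1 / 2) * 2 ^ (n + 1) * F +
              (n + 1) * (Real.exp (1 / 2) * 2 ^ n * (a + n).factorial) := by gcongr
        _ = Real.exp (1 / 2) * 2 ^ (n + 1) * F +
              Real.exp (1 / 2) * 2 ^ n * ((n + 1) * (a + n).factorial) := by ring
        _ ≤ Real.exp (1 / 2) * 2 ^ (n + 1) * F + Real.exp (1 / 2) * 2 ^ n * F := by gcongr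
        _ ≤ Real.exp (1 / 2) * 2 ^ (n + 1) * F + 2 * (Real.exp (1 / 2) * 2 ^ n * F) := by
              have : 0 ≤ Real.exp (1 / 2) * 2 ^ n * F := by positivity
              linarith
        _ = _ := by ring
  exact (key n).1 a

/-! ### Log-convex sequences -/

/-- The quotient `M_{p+1} / M_p`. -/
noncomputable def quot (M : ℕ → ℝ) (p : ℕ) : ℝ := M (p + 1) / M p

theorem quot_pos {M : ℕ → ℝ} (hM : IsLC M) (p : ℕ) : 0 < quot M p :=
  div_pos (hM.pos _) (hM.pos _)

theorem mul_quot {M : ℕ → ℝ} (hM : IsLC M) (p : ℕ) : M p * quot M p = M (p + 1) :=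
  mul_div_cancel₀ _ (hM.pos p).ne'

theorem quot_mono {M : ℕ → ℝ} (hM : IsLC M) : Monotone (quot M) := by
  refine monotone_nat_of_le_succ fun p => ?_
  rw [quot, quot, div_le_div_iff₀ (hM.pos _) (hM.pos _)]
  nlinarith [hM.logConvex p]

theorem mul_le_add {M : ℕ → ℝ} (hM : IsLC M) (j k : ℕ) : M j * M k ≤ M (j + k) := by
  induction k with
  | zero => simp [hM.norm0]
  | succ k ih =>
    calc M j * M (k + 1) = M j * M k * quot M k := by rw [← mul_quot hM k]; ring
      _ ≤ M (j + k) * quot M (j + k) :=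
          mul_le_mul ih (quot_mono hM (by omega)) (quot_pos hM k).le (hM.pos _).le
      _ = M (j + (k + 1)) := mul_quot hM _

/-- Log-convexity in the form: `j ↦ M_j / (M_{k+1} / M_k)^j` is minimal at `j = k`. -/
theorem mul_quot_pow_le {M : ℕ → ℝ} (hM : IsLC M) (k j : ℕ) :
    M k * quot M k ^ j ≤ M j * quot M k ^ k := by
  have hq := quot_pos hM k
  rcases le_total k j with h | h
  · induction j, h using Nat.le_induction with
    | base => rfl
    | succ j hj ih =>
      calc M k * quot M k ^ (j + 1) = M k * quot M k ^ j * quot M k := by ring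
        _ ≤ M j * quot M k ^ k * quot M k := by gcongr
        _ = M j * quot M k * quot M k ^ k := by ring
        _ ≤ M j * quot M j * quot M k ^ k := by
            have := quot_mono hM hj
            have := (hM.pos j).le
            gcongr
        _ = _ := by rw [mul_quot hM]
  · induction h using Nat.decreasingInduction with
    | self => rfl
    | of_succ j hj ih =>
      refine le_of_mul_le_mul_right ?_ hq
      calc M k * quot M k ^ j * quot M k = M k * quot M k ^ (j + 1) := by ring
        _ ≤ M (j + 1) * quot M k ^ k := ih
        _ = M j * quot M j * quot M k ^ k := by rw [mul_quot hM]
        _ ≤ M j * quot M k * quot M k ^ k := by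
            have := quot_mono hM hj.le
            have := (hM.pos j).le
            gcongr
        _ = _ := by ring

/-- Non-quasianalyticity forces `p!` to be dominated by `M`: the terms `M_{p-1} / M_p` of the
convergent series decrease, hence are `O(1 / p)`. -/
theorem factorial_le_of_nonQA {M : ℕ → ℝ} (hM : IsLC M) (h : nonQA M) :
    ∃ S : ℝ, 1 ≤ S ∧ ∀ p : ℕ, (p.factorial : ℝ) ≤ S ^ p * M p := by
  have ha : ∀ p, 0 < M p / M (p + 1) := fun p => div_pos (hM.pos _) (hM.pos _)
  refine ⟨max 1 (∑' p, M p / M (p + 1)), le_max_left _ _, fun p => ?_⟩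
  set S := max 1 (∑' p, M p / M (p + 1)) with hS
  have hS0 : 0 < S := lt_of_lt_of_le one_pos (le_max_left _ _)
  induction p with
  | zero => simp [hM.norm0]
  | succ p ih =>
    have h1 : ((p : ℝ) + 1) * (M p / M (p + 1)) ≤ S := by
      calc ((p : ℝ) + 1) * (M p / M (p + 1))
          = ∑ _i ∈ Finset.range (p + 1), M p / M (p + 1) := by simp
        _ ≤ ∑ i ∈ Finset.range (p + 1), M i / M (i + 1) := by
            refine Finset.sum_le_sum fun i hi => ?_
            have h2 := quot_mono hM (Nat.lt_succ_iff.1 (Finset.mem_range.1 hi))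
            have h3 := inv_anti₀ (quot_pos hM i) h2
            simpa [quot] using h3
        _ ≤ ∑' i, M i / M (i + 1) := h.sum_le_tsum _ fun i _ => (ha i).le
        _ ≤ S := le_max_right _ _
    have h2 : ((p : ℝ) + 1) * M p ≤ S * M (p + 1) := by
      rwa [← mul_div_assoc, div_le_iff₀ (hM.pos _)] at h1
    calc ((p + 1).factorial : ℝ) = (p + 1) * p.factorial := by
          rw [Nat.factorial_succ]; push_cast; ring
      _ ≤ (p + 1) * (S ^ p * M p) := by gcongr
      _ = S ^ p * ((p + 1) * M p) := by ring
      _ ≤ S ^ p * (S * M (p + 1)) := by gcongr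
      _ = _ := by ring

/-! ### Functions of one variable inside the multi-index formalism -/

theorem mderiv_one {F : ℝ → ℝ} (hF : ContDiff ℝ (⊤ : ℕ∞) F) (β : Fin 1 → ℕ) :
    mderiv β (fun x : Fin 1 → ℝ => F (x 0)) = fun x => iteratedDeriv (β 0) F (x 0) := by
  have key : ∀ n : ℕ, (pderivOp (0 : Fin 1))^[n] (fun x : Fin 1 → ℝ => F (x 0)) =
      fun x => iteratedDeriv n F (x 0) := by
    intro n
    induction n with
    | zero => simp
    | succ n ih =>
      rw [Function.iterate_succ_apply', ih]
      funext x
      have hd : HasDerivAt (iteratedDeriv n F) (iteratedDeriv (n + 1) F (x 0)) (x 0) := by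
        rw [iteratedDeriv_succ]
        exact (hF.differentiable_iteratedDeriv n
          (by exact_mod_cast WithTop.coe_lt_top _) _).hasDerivAt
      have hp : HasFDerivAt (fun x : Fin 1 → ℝ => x 0)
          (ContinuousLinearMap.proj (R := ℝ) (φ := fun _ : Fin 1 => ℝ) 0) x :=
        (ContinuousLinearMap.proj (R := ℝ) (φ := fun _ : Fin 1 => ℝ) 0).hasFDerivAt
      have hc := hd.comp_hasFDerivAt x hp
      have he : fderiv ℝ (fun x : Fin 1 → ℝ => iteratedDeriv n F (x 0)) x = _ := hc.fderiv
      rw [pderivOp, he]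
      simp
  simpa [mderiv, List.finRange_succ] using key (β 0)

/-! ### The test function -/

/-- The coefficient `2^{-k} M_k / (M_{k+1} / M_k)^k`. -/
noncomputable def coef (M : ℕ → ℝ) (k : ℕ) : ℝ := (1 / 2) ^ k * (M k / quot M k ^ k)

/-- The superposition of Gaussians centred at the quotients `M_{k+1} / M_k`. -/
noncomputable def testFun (M : ℕ → ℝ) (x : ℝ) : ℝ := ∑' k, coef M k * gauss (x - quot M k)

theorem coef_pos {M : ℕ → ℝ} (hM : IsLC M) (k : ℕ) : 0 < coef M k := by
  have := hM.pos k
  have := quot_pos hM k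
  unfold coef; positivity

theorem coef_mul_pow_le {M : ℕ → ℝ} (hM : IsLC M) (k j : ℕ) :
    coef M k * quot M k ^ j ≤ (1 / 2) ^ k * M j := by
  have hq := pow_pos (quot_pos hM k) k
  rw [coef, mul_assoc]
  gcongr
  rw [div_mul_eq_mul_div, div_le_iff₀ hq]
  exact mul_quot_pow_le hM k j

theorem term_bound {M : ℕ → ℝ} (hM : IsLC M) {S : ℝ} (hS : 1 ≤ S)
    (hfac : ∀ p : ℕ, (p.factorial : ℝ) ≤ S ^ p * M p) (a n k : ℕ) (x : ℝ) :
    |x| ^ a * (coef M k * |iteratedDeriv n gauss (x - quot M k)|) ≤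
      (2 * Real.exp (1 / 2) * (2 * S) ^ (a + n) * M (a + n)) * (1 / 2) ^ k := by
  set q := quot M k with hq
  set y := x - q with hy
  have hq0 : 0 < q := quot_pos hM k
  have hc := (coef_pos hM k).le
  have hx : |x| ^ a ≤ 2 ^ a * (q ^ a + |y| ^ a) := by
    rcases le_total q |y| with h | h
    · have : |x| ≤ 2 * |y| := by
        have : |x| ≤ |y| + |q| := by simpa [hy] using abs_add_le y q
        rw [abs_of_pos hq0] at this
        linarith
      calc |x| ^ a ≤ (2 * |y|) ^ a := by gcongr
        _ = 2 ^ a * |y| ^ a := mul_pow _ _ _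
        _ ≤ _ := by gcongr; have := pow_pos hq0 a; linarith
    · have : |x| ≤ 2 * q := by
        have : |x| ≤ |y| + |q| := by simpa [hy] using abs_add_le y q
        rw [abs_of_pos hq0] at this
        linarith
      calc |x| ^ a ≤ (2 * q) ^ a := by gcongr
        _ = 2 ^ a * q ^ a := mul_pow _ _ _
        _ ≤ _ := by gcongr; have := pow_nonneg (abs_nonneg y) a; linarith
  have g0 := pow_mul_iteratedDeriv_gauss_le n 0 y
  have ga := pow_mul_iteratedDeriv_gauss_le n a y
  simp only [pow_zero, one_mul, zero_add] at g0
  set D := |iteratedDeriv n gauss y| with hD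
  have c0 : coef M k ≤ (1 / 2) ^ k := by
    simpa [hM.norm0] using coef_mul_pow_le hM k 0
  have ca := coef_mul_pow_le hM k a
  rw [← hq] at ca
  have hMa := (hM.pos a).le
  have hMan := (hM.pos (a + n)).le
  have hfn : M a * (n.factorial : ℝ) ≤ S ^ (a + n) * M (a + n) := by
    calc M a * (n.factorial : ℝ) ≤ M a * (S ^ n * M n) := by gcongr; exact hfac n
      _ = S ^ n * (M a * M n) := by ring
      _ ≤ S ^ (a + n) * M (a + n) := by
          have := mul_le_add hM a n
          have := (hM.pos n).le
          gcongr
          omega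
  have hfan := hfac (a + n)
  calc |x| ^ a * (coef M k * D) ≤ 2 ^ a * (q ^ a + |y| ^ a) * (coef M k * D) := by gcongr
    _ = 2 ^ a * ((coef M k * q ^ a) * D + coef M k * (|y| ^ a * D)) := by ring
    _ ≤ 2 ^ a * (((1 / 2) ^ k * M a) * (Real.exp (1 / 2) * 2 ^ n * n.factorial) +
          (1 / 2) ^ k * (Real.exp (1 / 2) * 2 ^ n * (a + n).factorial)) := by gcongr
    _ = 2 ^ (a + n) * Real.exp (1 / 2) * (1 / 2) ^ k *
          (M a * n.factorial + (a + n).factorial) := by ring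
    _ ≤ 2 ^ (a + n) * Real.exp (1 / 2) * (1 / 2) ^ k *
          (S ^ (a + n) * M (a + n) + S ^ (a + n) * M (a + n)) := by gcongr
    _ = _ := by rw [mul_pow]; ring

theorem norm_iteratedFDeriv_term {M : ℕ → ℝ} (hM : IsLC M) (n k : ℕ) (x : ℝ) :
    ‖iteratedFDeriv ℝ n (fun x => coef M k * gauss (x - quot M k)) x‖ =
      coef M k * |iteratedDeriv n gauss (x - quot M k)| := by
  rw [norm_iteratedFDeriv_eq_norm_iteratedDeriv,
    iteratedDeriv_const_mul_field (coef M k) (fun x => gauss (x - quot M k)),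
    iteratedDeriv_comp_sub_const, Real.norm_eq_abs, abs_mul, abs_of_pos (coef_pos hM k)]

theorem testFun_smooth_and_bound {M : ℕ → ℝ} (hM : IsLC M) {S : ℝ} (hS : 1 ≤ S)
    (hfac : ∀ p : ℕ, (p.factorial : ℝ) ≤ S ^ p * M p) :
    ContDiff ℝ (⊤ : ℕ∞) (testFun M) ∧ ∀ (a n : ℕ) (x : ℝ),
      |x| ^ a * |iteratedDeriv n (testFun M) x| ≤
        4 * Real.exp (1 / 2) * (2 * S) ^ (a + n) * M (a + n) := by
  have hgeom : ∀ c : ℝ, HasSum (fun k : ℕ => c * (1 / 2 : ℝ) ^ k) (c * 2) :=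
    fun c => hasSum_geometric_two.mul_left c
  have hsm : ∀ k, ContDiff ℝ (⊤ : ℕ∞) (fun x => coef M k * gauss (x - quot M k)) := fun k =>
    contDiff_const.mul (contDiff_gauss.comp (contDiff_id.sub contDiff_const))
  have hb : ∀ (n k : ℕ) (x : ℝ), ((n : ℕ∞) ≤ ⊤) →
      ‖iteratedFDeriv ℝ n (fun x => coef M k * gauss (x - quot M k)) x‖ ≤
        (2 * Real.exp (1 / 2) * (2 * S) ^ (0 + n) * M (0 + n)) * (1 / 2) ^ k := by
    intro n k x _
    rw [norm_iteratedFDeriv_term hM]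
    simpa using term_bound hM hS hfac 0 n k x
  refine ⟨contDiff_tsum hsm (fun n _ => (hgeom _).summable) hb, fun a n x => ?_⟩
  have hD := iteratedFDeriv_tsum_apply hsm (fun n _ => (hgeom _).summable) hb
    (k := n) le_top x
  rw [← Real.norm_eq_abs (iteratedDeriv n _ x), ← norm_iteratedFDeriv_eq_norm_iteratedDeriv]
  change |x| ^ a * ‖iteratedFDeriv ℝ n
    (fun y => ∑' k, coef M k * gauss (y - quot M k)) x‖ ≤ _
  have hx : |x| ^ a = ‖|x| ^ a‖ := by simp
  rw [hD, hx, ← norm_smul, ← tsum_const_smul'']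
  refine (tsum_of_norm_bounded
    (hgeom (2 * Real.exp (1 / 2) * (2 * S) ^ (a + n) * M (a + n))) fun k => ?_).trans
    (le_of_eq (by ring))
  rw [norm_smul, ← hx, norm_iteratedFDeriv_term hM]
  exact term_bound hM hS hfac a n k x

/-- At the centre of the `p`-th Gaussian, all other summands being positive, the test function
multiplied by `x^p` has size at least `2^{-p} M_p`. -/
theorem testFun_lower {M : ℕ → ℝ} (hM : IsLC M) (p : ℕ) :
    (1 / 2) ^ p * M p ≤ quot M p ^ p * testFun M (quot M p) := by
  have hpos : ∀ k x, 0 < coef M k * gauss x := fun k x =>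
    mul_pos (coef_pos hM k) (Real.exp_pos _)
  have hsum : Summable fun k => coef M k * gauss (quot M p - quot M k) := by
    refine Summable.of_nonneg_of_le (fun k => (hpos k _).le) (fun k => ?_)
      summable_geometric_two
    have h1 : coef M k ≤ (1 / 2) ^ k := by
      simpa [hM.norm0] using coef_mul_pow_le hM k 0
    have h2 : gauss (quot M p - quot M k) ≤ 1 := Real.exp_le_one_iff.2 (by
      have := sq_nonneg (quot M p - quot M k); linarith)
    calc _ ≤ coef M k * 1 := by gcongr; exact (coef_pos hM k).le
      _ ≤ _ := by simpa using h1
  have h := hsum.le_tsum p fun k _ => (hpos k _).le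
  have hq := pow_pos (quot_pos hM p) p
  calc (1 / 2) ^ p * M p = quot M p ^ p * (coef M p * gauss (quot M p - quot M p)) := by
        simp only [coef, gauss, sub_self]
        field_simp
        simp
    _ ≤ _ := by gcongr; exact h

theorem testFun_mem {M : ℕ → ℝ} (hM : IsLC M) {S : ℝ} (hS : 1 ≤ S)
    (hfac : ∀ p : ℕ, (p.factorial : ℝ) ≤ S ^ p * M p) :
    (fun x : Fin 1 → ℝ => testFun M (x 0)) ∈ SRoumieuSeq M 1 := by
  obtain ⟨hs, hb⟩ := testFun_smooth_and_bound hM hS hfac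
  refine ⟨hs.comp (contDiff_apply ℝ ℝ 0), 4 * Real.exp (1 / 2), by positivity, 2 * S,
    by positivity, fun α β x => ?_⟩
  rw [mderiv_one hs]
  simpa [mpow, msize, abs_mul] using hb (α 0) (β 0) (x 0)

/-! ### The two implications -/

theorem inclusion_of_matPreceqR {M N : ℝ → ℕ → ℝ} (h : matPreceqR M N) (d : ℕ) :
    SRoumieuMat M d ⊆ SRoumieuMat N d := by
  rintro f ⟨l, hl, hf, C, hC, r, hr, hb⟩
  obtain ⟨k, hk, A, hA, hAb⟩ := h l hl
  refine ⟨k, hk, hf, C, hC, r * A, by positivity, fun α β x => (hb α β x).trans ?_⟩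
  calc C * r ^ (msize α + msize β) * M l (msize α + msize β)
      ≤ C * r ^ (msize α + msize β) *
        (A ^ (msize α + msize β) * N k (msize α + msize β)) := by gcongr; exact hAb _
    _ = _ := by rw [mul_pow]; ring

/-- Absorbs a multiplicative constant into the geometric factor, using `M_0 = N_0`. -/
theorem seqPreceq_of_le {M N : ℕ → ℝ} (hN : ∀ p, 0 < N p) (h0 : M 0 = N 0) {C r : ℝ}
    (hr : 0 < r) (h : ∀ p, M p ≤ C * r ^ p * N p) : seqPreceq M N := by
  refine ⟨max 1 C * max 1 r, one_le_mul_of_one_le_of_one_le (le_max_left _ _) (le_max_left _ _),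
    fun p => ?_⟩
  rcases Nat.eq_zero_or_pos p with rfl | hp
  · simp [h0]
  · have hNp := (hN p).le
    refine (h p).trans ?_
    rw [mul_pow]
    have h1 : C ≤ max 1 C ^ p :=
      (le_max_right 1 C).trans (le_self_pow₀ (le_max_left _ _) hp.ne')
    have h2 : r ≤ max 1 r := le_max_right _ _
    gcongr

/-- The key step of the converse, for a single sequence dominating `p!`. -/
theorem exists_seqPreceq {M : ℕ → ℝ} {N : ℝ → ℕ → ℝ} (hM : IsLC M) (hN : IsWeightMatrix N)
    {S : ℝ} (hS : 1 ≤ S) (hfac : ∀ p : ℕ, (p.factorial : ℝ) ≤ S ^ p * M p)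
    (hsub : SRoumieuSeq M 1 ⊆ SRoumieuMat N 1) : ∃ k > 0, seqPreceq M (N k) := by
  obtain ⟨k, hk, -, C, hC, r, hr, hb⟩ := hsub (testFun_mem hM hS hfac)
  refine ⟨k, hk, seqPreceq_of_le (C := C) (r := 2 * r) (hN.1 k hk).1
    (by rw [hM.norm0, (hN.1 k hk).2]) (by positivity) fun p => ?_⟩
  have hs := (testFun_smooth_and_bound hM hS hfac).1
  have h := hb (fun _ => p) (fun _ => 0) (fun _ => quot M p)
  rw [mderiv_one hs] at h
  simp only [mpow, msize, Finset.univ_unique, Finset.prod_singleton, Finset.sum_singleton,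
    iteratedDeriv_zero, add_zero] at h
  have h2 := (testFun_lower hM p).trans ((le_abs_self _).trans h)
  calc M p = 2 ^ p * ((1 / 2) ^ p * M p) := by
        rw [← mul_assoc, ← mul_pow]; norm_num
    _ ≤ 2 ^ p * (C * r ^ p * N k p) := by gcongr
    _ = _ := by rw [mul_pow]; ring

/-- Theorem `Gelfand-inclusion2`: for weight matrices `𝓜, 𝓝`,
`𝓜{⪯}𝓝` implies `S_{{𝓜}}(ℝ^d) ⊆ S_{{𝓝}}(ℝ^d)` for every `d`; conversely, if `𝓜` is
standard log-convex and Roumieu non-quasianalytic and the inclusion holds in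
dimension `1`, then `𝓜{⪯}𝓝`. -/
theorem roumieu_inclusion_nonquasianalytic_matrices (M N : ℝ → ℕ → ℝ)
    (hM : IsWeightMatrix M) (hN : IsWeightMatrix N) :
    (matPreceqR M N → ∀ d : ℕ, 0 < d → SRoumieuMat M d ⊆ SRoumieuMat N d) ∧
    (StdLogConvex M → (∃ l₀ > 0, nonQA (M l₀)) →
      SRoumieuMat M 1 ⊆ SRoumieuMat N 1 → matPreceqR M N) := by
  refine ⟨fun h d _ => inclusion_of_matPreceqR h d, ?_⟩
  rintro hLC ⟨l₀, hl₀, hQ⟩ hsub l hl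
  obtain ⟨S, hS, hfac⟩ := factorial_le_of_nonQA (hLC l₀ hl₀) hQ
  have hm : 0 < max l l₀ := lt_max_of_lt_left hl
  obtain ⟨k, hk, A, hA, hAb⟩ := exists_seqPreceq (hLC _ hm) hN hS
    (fun p => (hfac p).trans (by
      have := hM.2 l₀ (max l l₀) hl₀ (le_max_right _ _) p
      gcongr))
    (fun f hf => hsub ⟨_, hm, hf⟩)
  exact ⟨k, hk, A, hA, fun p => (hM.2 l _ hl (le_max_left _ _) p).trans (hAb p)⟩
end

section
/- Let ω be a non-quasianalytic weight function (i.e. ∫_1^∞ ω(t)/t² dt < ∞) and let σ be a general weight function. Then σ(t)=O(ω(t)) as t→∞ if and only if S_{{ω}}(ℝ^d) ⊆ S_{{σ}}(ℝ^d) for all dimensions d∈ℕ; the implication from σ=O(ω) to the inclusions holds for arbitrary general weight functions, and for the converse only the inclusion in dimension d=1 is required. -/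
/-!
The weight `exp (φ*_ω(l k) / l)` equals `sup_{t ≥ 1} t ^ k * exp (-ω t / l)`
(`mul_exp_le_wWeight`, `wWeight_le`). If `σ ≤ C ω + D` on `[0, ∞)`, comparing the two suprema
gives `wWeight ω l ≤ exp (D / (C l)) * wWeight σ (C l)`, hence the inclusion of the classes in
every dimension.

For the converse it is enough to find one function of `S_{ω}(ℝ)` that decays no faster than
`exp (-A ω)` along the integers. Such a function is
`f x = ∑ n, exp (-A ω n) * exp (-(x - n) ^ 2 / 2)`. Condition (β) bounds `(3 √k) ^ k` by a
constant times `wWeight ω l k`, which controls the Gaussian and its derivatives (`abs_gaussD_le`,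
`gaussian_pow_le_wWeight`), while (α) gives `(3 n) ^ k ≤ wWeight ω l k * exp (A₀ ω n + E)`
(`pow_le_wWeight_mul_exp`), which absorbs the polynomial factor. Since only the decay of `f`
matters, no compactly supported ultradifferentiable functions are needed.

If `f` also lies in `S_{σ}(ℝ)`, then `n ^ k * exp (-A ω n) ≤ C * wWeight σ l k` for all `k`.
A subgradient of the convex function `x ↦ σ (exp x)` at `log n` produces an integer `k` with
`wWeight σ l k ≤ n ^ (k + 1) * exp (-σ n / l)` (`exists_wWeight_le`). Therefore
`σ n ≤ l (A ω n + log n + const)`, and (γ) and (α) turn this into `σ = O(ω)`.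
-/

open Filter Asymptotics

/-! ### The weights as suprema -/

/-- Condition (γ) makes the supremum defining the Young conjugate finite. -/
lemma youngConj_bddAbove {ω : ℝ → ℝ} (hω : IsGenWeightFun ω) {s : ℝ} (hs : 0 ≤ s) :
    BddAbove {y : ℝ | ∃ t : ℝ, 0 ≤ t ∧ y = s * t - ω (Real.exp t)} := by
  have h := hω.gamma.def (c := 1 / (s + 1)) (by positivity)
  obtain ⟨T, hT⟩ := eventually_atTop.1 h
  refine ⟨max 0 (s * T), ?_⟩
  rintro y ⟨t, ht, rfl⟩
  have hn := hω.nonneg (Real.exp t) (Real.exp_pos t).le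
  rcases le_total T (Real.exp t) with h1 | h1
  · refine le_max_of_le_left ?_
    have h2 := hT _ h1
    rw [Real.log_exp, Real.norm_of_nonneg ht, Real.norm_of_nonneg hn, one_div,
      inv_mul_eq_div, le_div_iff₀ (by positivity)] at h2
    nlinarith
  · refine le_max_of_le_right ?_
    have h2 : t ≤ T := by linarith [Real.add_one_le_exp t]
    nlinarith [mul_le_mul_of_nonneg_left h2 hs]

lemma mul_exp_le_wWeight {ω : ℝ → ℝ} (hω : IsGenWeightFun ω) {l : ℝ} (hl : 0 < l) (k : ℕ)
    {t : ℝ} (ht : 1 ≤ t) : t ^ k * Real.exp (-(ω t / l)) ≤ wWeight ω l k := by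
  have ht0 : 0 < t := by linarith
  have h1 : l * k * Real.log t - ω t ≤ youngConj ω (l * k) := by
    refine le_csSup (youngConj_bddAbove hω (by positivity)) ⟨Real.log t, Real.log_nonneg ht, ?_⟩
    rw [Real.exp_log ht0]
  have h2 : t ^ k = Real.exp (k * Real.log t) := by
    rw [Real.exp_nat_mul, Real.exp_log ht0]
  rw [h2, ← Real.exp_add, wWeight]
  refine Real.exp_le_exp.2 ?_
  calc k * Real.log t + -(ω t / l) = 1 / l * (l * k * Real.log t - ω t) := by
        field_simp; ring
    _ ≤ _ := by gcongr

lemma wWeight_le {ω : ℝ → ℝ} {l : ℝ} (hl : 0 < l) (k : ℕ) {M : ℝ} (hM : 0 < M)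
    (h : ∀ t, 1 ≤ t → t ^ k * Real.exp (-(ω t / l)) ≤ M) : wWeight ω l k ≤ M := by
  rw [wWeight, ← Real.le_log_iff_exp_le hM, one_div, inv_mul_le_iff₀ hl]
  refine csSup_le ⟨_, 0, le_rfl, rfl⟩ ?_
  rintro y ⟨t, ht, rfl⟩
  have h1 := h (Real.exp t) (Real.one_le_exp ht)
  rw [← Real.exp_nat_mul, ← Real.exp_add, ← Real.le_log_iff_exp_le hM] at h1
  calc l * k * t - ω (Real.exp t) = l * (k * t + -(ω (Real.exp t) / l)) := by field_simp; ring
    _ ≤ _ := by gcongr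

lemma wWeight_pos (ω : ℝ → ℝ) (l : ℝ) (k : ℕ) : 0 < wWeight ω l k := Real.exp_pos _

/-! ### Growth of the weights controls the classes -/

/-- For nonnegative monotone functions an `O`-estimate at infinity is an affine estimate on all
of `[0, ∞)`. -/
lemma exists_affine_bound {f g : ℝ → ℝ} (hf : MonotoneOn f (Set.Ici 0))
    (hf0 : ∀ t, 0 ≤ t → 0 ≤ f t) (hg0 : ∀ t, 0 ≤ t → 0 ≤ g t) (h : f =O[atTop] g) :
    ∃ C > 0, ∃ D, 0 ≤ D ∧ ∀ t, 0 ≤ t → f t ≤ C * g t + D := by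
  obtain ⟨C, hC, hCb⟩ := h.exists_pos
  obtain ⟨T, hT⟩ := eventually_atTop.1 hCb.bound
  have hD := hf0 (max T 0) (le_max_right _ _)
  refine ⟨C, hC, f (max T 0), hD, fun t ht => ?_⟩
  have hg := mul_nonneg hC.le (hg0 t ht)
  rcases le_total T t with h1 | h1
  · have h2 := hT t h1
    rw [Real.norm_of_nonneg (hf0 t ht), Real.norm_of_nonneg (hg0 t ht)] at h2
    linarith
  · have := hf (Set.mem_Ici.2 ht) (Set.mem_Ici.2 (le_max_right T 0)) (le_max_of_le_left h1)
    linarith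

theorem roumieu_subset_of_isBigO {ω σ : ℝ → ℝ} (hω : IsGenWeightFun ω) (hσ : IsGenWeightFun σ)
    (h : σ =O[atTop] ω) (d : ℕ) : SRoumieuW ω d ⊆ SRoumieuW σ d := by
  obtain ⟨C, hC, D, hD, hb⟩ := exists_affine_bound hσ.mono hσ.nonneg hω.nonneg h
  rintro f ⟨hf, l, hl, B, hB, hfb⟩
  have key : ∀ k, wWeight ω l k ≤ Real.exp (D / (C * l)) * wWeight σ (C * l) k := by
    intro k
    refine wWeight_le hl k (mul_pos (Real.exp_pos _) (wWeight_pos _ _ _)) fun t ht => ?_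
    have h1 := mul_exp_le_wWeight hσ (mul_pos hC hl) k ht
    have h2 : -(ω t / l) ≤ D / (C * l) + -(σ t / (C * l)) := by
      have h3 := hb t (by linarith)
      have : D / (C * l) + -(σ t / (C * l)) - -(ω t / l) = (C * ω t + D - σ t) / (C * l) := by
        field_simp; ring
      have : 0 ≤ (C * ω t + D - σ t) / (C * l) := div_nonneg (by linarith) (by positivity)
      linarith
    calc t ^ k * Real.exp (-(ω t / l))
        ≤ t ^ k * Real.exp (D / (C * l) + -(σ t / (C * l))) := by gcongr
      _ = Real.exp (D / (C * l)) * (t ^ k * Real.exp (-(σ t / (C * l)))) := by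
        rw [Real.exp_add]; ring
      _ ≤ _ := by gcongr
  refine ⟨hf, C * l, mul_pos hC hl, B * Real.exp (D / (C * l)), by positivity, fun α β x => ?_⟩
  refine (hfb α β x).trans ?_
  rw [mul_assoc]
  have := key (msize α + msize β)
  gcongr

/-! ### Derivatives of the Gaussian -/

/-- The `k`-th derivative of `x ↦ exp (-x ^ 2 / 2)`, defined through the three-term recurrence of
the Hermite polynomials. -/
noncomputable def gaussD : ℕ → ℝ → ℝ
  | 0, x => Real.exp (-x ^ 2 / 2)
  | 1, x => -x * Real.exp (-x ^ 2 / 2)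
  | n + 2, x => -x * gaussD (n + 1) x - (n + 1) * gaussD n x

lemma hasDerivAt_gaussD (k : ℕ) (x : ℝ) : HasDerivAt (gaussD k) (gaussD (k + 1) x) x := by
  have h0 : ∀ x : ℝ, HasDerivAt (gaussD 0) (gaussD 1 x) x := by
    intro x
    have h := (((hasDerivAt_id x).pow 2).neg.div_const 2).exp
    convert! h using 1
    simp [gaussD]; ring
  induction k using Nat.twoStepInduction with
  | zero => exact h0 x
  | one =>
    have h := (hasDerivAt_id x).neg.mul (h0 x)
    convert! h using 1
    simp [gaussD]; ring
  | more n ih0 ih1 =>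
    have h := ((hasDerivAt_id x).neg.mul ih1).sub (ih0.const_mul ((n : ℝ) + 1))
    convert! h using 1
    simp [gaussD]; ring

/-- The size of the Hermite polynomials, read off from the recurrence. The fixed upper bound `N`
for the index keeps the base `|x| + √N` constant along the induction. -/
lemma abs_gaussD_le (N k : ℕ) (hk : k ≤ N) (x : ℝ) :
    |gaussD k x| ≤ (|x| + √N) ^ k * Real.exp (-x ^ 2 / 2) := by
  induction k using Nat.twoStepInduction with
  | zero => simp [gaussD]
  | one =>
    simp only [gaussD, abs_mul, abs_neg, Real.abs_exp, pow_one]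
    gcongr
    linarith [Real.sqrt_nonneg (N : ℝ)]
  | more n ih0 ih1 =>
    have h0 := ih0 (by omega)
    have h1 := ih1 (by omega)
    have hs := Real.sq_sqrt (Nat.cast_nonneg (α := ℝ) N)
    have hs0 := Real.sqrt_nonneg (N : ℝ)
    have hx := abs_nonneg x
    have hn : (n : ℝ) + 1 ≤ N := by exact_mod_cast (by omega : n + 1 ≤ N)
    set A := |x| + √N with hA
    have hA0 : 0 ≤ A := by positivity
    simp only [gaussD]
    calc |-x * gaussD (n + 1) x - (n + 1) * gaussD n x|
        ≤ |-x * gaussD (n + 1) x| + |((n : ℝ) + 1) * gaussD n x| := abs_sub _ _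
      _ = |x| * |gaussD (n + 1) x| + ((n : ℝ) + 1) * |gaussD n x| := by
        rw [abs_mul, abs_mul, abs_neg, abs_of_nonneg (by positivity : (0 : ℝ) ≤ n + 1)]
      _ ≤ |x| * (A ^ (n + 1) * Real.exp (-x ^ 2 / 2)) + N * (A ^ n * Real.exp (-x ^ 2 / 2)) := by
        gcongr
      _ = (|x| * A + N) * (A ^ n * Real.exp (-x ^ 2 / 2)) := by ring
      _ ≤ A ^ 2 * (A ^ n * Real.exp (-x ^ 2 / 2)) := by
        gcongr
        nlinarith
      _ = _ := by ring

lemma abs_pow_mul_gaussian_le (k : ℕ) (y : ℝ) :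
    |y| ^ k * Real.exp (-y ^ 2 / 2) ≤ √k ^ k := by
  refine le_of_sq_le_sq ?_ (by positivity)
  have h1 := Real.pow_div_factorial_le_exp (y ^ 2) (sq_nonneg y) k
  rw [div_le_iff₀ (by positivity)] at h1
  have h2 : (k.factorial : ℝ) ≤ (k : ℝ) ^ k := by exact_mod_cast Nat.factorial_le_pow k
  calc (|y| ^ k * Real.exp (-y ^ 2 / 2)) ^ 2 = (y ^ 2) ^ k * Real.exp (-y ^ 2) := by
        rw [mul_pow, ← pow_mul, mul_comm k 2, pow_mul, sq_abs, ← Real.exp_nat_mul]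
        congr 2; push_cast; ring
    _ ≤ (Real.exp (y ^ 2) * k.factorial) * Real.exp (-y ^ 2) := by gcongr
    _ = k.factorial := by
        rw [mul_right_comm, ← Real.exp_add]; simp
    _ ≤ (k : ℝ) ^ k := h2
    _ = (√k ^ k) ^ 2 := by
        rw [← pow_mul, mul_comm k 2, pow_mul, Real.sq_sqrt (Nat.cast_nonneg _)]

/-- A monomial times a derivative of a Gaussian centred at distance at most `a` from the origin. -/
lemma abs_pow_mul_gaussD_le (α β : ℕ) {a x y : ℝ} (ha : 0 ≤ a) (hx : |x| ≤ a + |y|) :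
    |x| ^ α * |gaussD β y| ≤ (3 * a) ^ (α + β) + 2 * (3 * √(α + β : ℕ)) ^ (α + β) := by
  have hg := abs_gaussD_le (α + β) β (by omega) y
  have hp := abs_pow_mul_gaussian_le (α + β) y
  generalize hk : α + β = k at *
  have hs := Real.sqrt_nonneg (k : ℝ)
  have hy := abs_nonneg y
  have hE : Real.exp (-y ^ 2 / 2) ≤ 1 := Real.exp_le_one_iff.2 (by nlinarith [sq_nonneg y])
  have hE0 := Real.exp_pos (-y ^ 2 / 2)
  set E := Real.exp (-y ^ 2 / 2)
  have hmax : (a + |y| + √k) ^ k ≤ 3 ^ k * (a ^ k + |y| ^ k + √k ^ k) := by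
    have p1 : 0 ≤ a ^ k := by positivity
    have p2 : 0 ≤ |y| ^ k := by positivity
    have p3 : 0 ≤ √k ^ k := by positivity
    have step : ∀ m : ℝ, a + |y| + √k ≤ 3 * m → m ^ k ≤ a ^ k + |y| ^ k + √k ^ k →
        (a + |y| + √k) ^ k ≤ 3 ^ k * (a ^ k + |y| ^ k + √k ^ k) := by
      intro m h1 h2
      calc (a + |y| + √k) ^ k ≤ (3 * m) ^ k := by gcongr
        _ = 3 ^ k * m ^ k := mul_pow _ _ _
        _ ≤ _ := by gcongr
    rcases le_total a |y| with h1 | h1 <;> rcases le_total a √k with h2 | h2 <;>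
      rcases le_total |y| √k with h3 | h3
    all_goals first
      | exact step a (by linarith) (by linarith)
      | exact step |y| (by linarith) (by linarith)
      | exact step √k (by linarith) (by linarith)
  calc |x| ^ α * |gaussD β y| ≤ (a + |y| + √k) ^ α * ((a + |y| + √k) ^ β * E) := by
        have h1 : |x| ≤ a + |y| + √k := by linarith
        have h2 : |gaussD β y| ≤ (a + |y| + √k) ^ β * E := by
          refine hg.trans ?_
          gcongr
          linarith
        gcongr
    _ = (a + |y| + √k) ^ k * E := by rw [← hk, pow_add]; ring
    _ ≤ 3 ^ k * (a ^ k + |y| ^ k + √k ^ k) * E := by gcongr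
    _ = 3 ^ k * (a ^ k * E + |y| ^ k * E + √k ^ k * E) := by ring
    _ ≤ 3 ^ k * (a ^ k * 1 + √k ^ k + √k ^ k * 1) := by gcongr
    _ = _ := by rw [mul_pow, mul_pow]; ring

/-! ### Absorbing powers into the weights -/

/-- Condition (β) in the form in which it is used: Gaussian growth is dominated by the weights. -/
lemma gaussian_pow_le_wWeight {ω : ℝ → ℝ} (hω : IsWeightFun ω) :
    ∃ l : ℝ, 1 ≤ l ∧ ∃ K > 0, ∀ k : ℕ, (3 * √k) ^ k ≤ K * wWeight ω l k := by
  obtain ⟨B, hB, D, hD, hb⟩ := exists_affine_bound hω.mono hω.nonneg (fun t _ => sq_nonneg t)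
    hω.beta
  -- At `t = 3 e √k` the quadratic bound costs `9 e² B k / l ≤ k`, which the factor `e ^ k` pays.
  set c : ℝ := 3 * Real.exp 1 with hc
  have hc3 : 3 ≤ c := by linarith [Real.add_one_le_exp (1 : ℝ)]
  set l : ℝ := 1 + c ^ 2 * B with hl
  have hl1 : 1 ≤ l := by have : 0 ≤ c ^ 2 * B := by positivity
                         linarith
  have hl0 : 0 < l := by linarith
  refine ⟨l, hl1, Real.exp (B + D), Real.exp_pos _, fun k => ?_⟩
  have main : ∀ t : ℝ, 1 ≤ t → ∀ u : ℝ, ω t / l ≤ u + (B + D) →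
      t ^ k * Real.exp (-u) ≤ Real.exp (B + D) * wWeight ω l k := by
    intro t ht u hu
    calc t ^ k * Real.exp (-u) ≤ t ^ k * Real.exp (B + D + -(ω t / l)) := by
          gcongr; linarith
      _ = Real.exp (B + D) * (t ^ k * Real.exp (-(ω t / l))) := by rw [Real.exp_add]; ring
      _ ≤ _ := by gcongr; exact mul_exp_le_wWeight hω.toIsGenWeightFun hl0 k ht
  rcases Nat.eq_zero_or_pos k with rfl | hk
  · have h1 := main 1 le_rfl 0 (by
      rw [div_le_iff₀ hl0]
      have := hb 1 zero_le_one
      nlinarith)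
    simpa using h1
  · have hk1 : (1 : ℝ) ≤ k := by exact_mod_cast hk
    have hs : 1 ≤ √(k : ℝ) := Real.one_le_sqrt.2 hk1
    have h1 := main (c * √k) (by nlinarith) k (by
      rw [div_le_iff₀ hl0]
      have h2 := hb (c * √k) (by positivity)
      rw [mul_pow, Real.sq_sqrt (by positivity)] at h2
      have : 0 ≤ c ^ 2 * B := by positivity
      nlinarith [mul_nonneg (add_nonneg hB.le hD) this])
    refine le_trans (le_of_eq ?_) h1
    rw [hc, mul_pow, mul_pow, mul_pow, ← Real.exp_nat_mul, mul_one]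
    have : Real.exp k * Real.exp (-k) = 1 := by rw [← Real.exp_add]; simp
    linear_combination (- (3 ^ k * √(k : ℝ) ^ k)) * this

lemma pow_le_wWeight_mul_exp {ω : ℝ → ℝ} (hω : IsGenWeightFun ω) :
    ∃ A, 0 ≤ A ∧ ∃ E : ℝ, ∀ l : ℝ, 1 ≤ l → ∀ k n : ℕ,
      (3 * (n : ℝ)) ^ k ≤ wWeight ω l k * Real.exp (A * ω n + E) := by
  obtain ⟨L, hL, ha⟩ := hω.alpha
  refine ⟨L ^ 2, by positivity, L ^ 2 + L + ω 1, fun l hl k n => ?_⟩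
  have hl0 : 0 < l := by linarith
  have hn : (0 : ℝ) ≤ n := Nat.cast_nonneg n
  set t : ℝ := max (3 * n) 1 with ht
  have ht1 : 1 ≤ t := le_max_right _ _
  have h1 := hω.nonneg 1 zero_le_one
  have hω4 : ω (2 * (2 * n)) ≤ L ^ 2 * ω n + (L ^ 2 + L) := by
    have e1 := ha (2 * n) (by positivity)
    have e2 := mul_le_mul_of_nonneg_left (ha n hn) (by linarith : 0 ≤ L)
    nlinarith
  have hωt : ω t ≤ L ^ 2 * ω n + (L ^ 2 + L + ω 1) := by
    rcases le_total (3 * (n : ℝ)) 1 with h | h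
    · rw [ht, max_eq_right h]
      have := hω.nonneg n hn
      have : 0 ≤ L ^ 2 * ω n := by positivity
      nlinarith
    · rw [ht, max_eq_left h]
      have := hω.mono (Set.mem_Ici.2 (by positivity : 0 ≤ 3 * (n : ℝ)))
        (Set.mem_Ici.2 (by positivity : 0 ≤ 2 * (2 * (n : ℝ)))) (by linarith)
      linarith
  have hdiv : ω t / l ≤ ω t := div_le_self (hω.nonneg t (by linarith)) hl
  calc (3 * (n : ℝ)) ^ k ≤ t ^ k := by gcongr; exact le_max_left _ _
    _ = t ^ k * Real.exp (-(ω t / l)) * Real.exp (ω t / l) := by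
      rw [mul_assoc, ← Real.exp_add]; simp
    _ ≤ _ := by
      gcongr
      · exact (wWeight_pos _ _ _).le
      · exact mul_exp_le_wWeight hω hl0 k ht1
      · linarith

lemma summable_exp_neg {ω : ℝ → ℝ} (hω : IsGenWeightFun ω) :
    Summable fun n : ℕ => Real.exp (-ω n) := by
  have hs : Summable fun n : ℕ => 1 / (n : ℝ) ^ 2 := Real.summable_one_div_nat_pow.2 one_lt_two
  refine hs.of_norm_bounded_eventually_nat ?_
  have h := tendsto_natCast_atTop_atTop.eventually (hω.gamma.def (c := 1 / 2) (by norm_num))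
  filter_upwards [h, eventually_ge_atTop 1] with n hn h1
  have h1' : (1 : ℝ) ≤ n := by exact_mod_cast h1
  have hn0 : (0 : ℝ) < n := by linarith
  rw [Real.norm_of_nonneg (Real.log_nonneg h1'), Real.norm_of_nonneg (hω.nonneg n hn0.le)] at hn
  rw [Real.norm_of_nonneg (Real.exp_pos _).le, one_div, ← Real.exp_log (pow_pos hn0 2),
    ← Real.exp_neg, Real.log_pow]
  refine Real.exp_le_exp.2 ?_
  push_cast
  linarith

/-! ### Series of translated Gaussians -/

/-- The `k`-th derivative of `x ↦ ∑ n, a n * exp (-(x - n) ^ 2 / 2)`, differentiated termwise. -/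
noncomputable def gaussSeries (a : ℕ → ℝ) (k : ℕ) (x : ℝ) : ℝ := ∑' n : ℕ, a n * gaussD k (x - n)

lemma abs_gaussD_le_const (k : ℕ) (y : ℝ) :
    |gaussD k y| ≤ (3 * 0) ^ k + 2 * (3 * √(k : ℕ)) ^ k := by
  have := abs_pow_mul_gaussD_le 0 k le_rfl (a := 0) (x := 0) (y := y) (by simp)
  simpa using this

lemma summable_gaussSeries {a : ℕ → ℝ} (ha : ∀ n, 0 ≤ a n) (hs : Summable a) (k : ℕ) (x : ℝ) :
    Summable fun n : ℕ => a n * gaussD k (x - n) := by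
  refine (hs.mul_right ((3 * 0) ^ k + 2 * (3 * √(k : ℕ)) ^ k)).of_norm_bounded fun n => ?_
  rw [norm_mul, Real.norm_of_nonneg (ha n)]
  exact mul_le_mul_of_nonneg_left (abs_gaussD_le_const _ _) (ha n)

lemma hasDerivAt_gaussSeries {a : ℕ → ℝ} (ha : ∀ n, 0 ≤ a n) (hs : Summable a) (k : ℕ) (x : ℝ) :
    HasDerivAt (gaussSeries a k) (gaussSeries a (k + 1) x) x := by
  refine hasDerivAt_tsum (g := fun (n : ℕ) y => a n * gaussD k (y - n))
    (g' := fun (n : ℕ) y => a n * gaussD (k + 1) (y - n))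
    (hs.mul_right ((3 * 0) ^ (k + 1) + 2 * (3 * √(k + 1 : ℕ)) ^ (k + 1)))
    (fun n y => ?_) (fun n y => ?_) (summable_gaussSeries ha hs k 0) x
  · exact ((hasDerivAt_gaussD k (y - n)).comp_sub_const y n).const_mul (a n)
  · rw [norm_mul, Real.norm_of_nonneg (ha n)]
    exact mul_le_mul_of_nonneg_left (abs_gaussD_le_const _ _) (ha n)

lemma contDiff_gaussSeries {a : ℕ → ℝ} (ha : ∀ n, 0 ≤ a n) (hs : Summable a) (k : ℕ) :
    ContDiff ℝ (⊤ : ℕ∞) (gaussSeries a k) := by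
  refine contDiff_infty.2 fun m => ?_
  have hd : ∀ k, Differentiable ℝ (gaussSeries a k) := fun k x =>
    (hasDerivAt_gaussSeries ha hs k x).differentiableAt
  induction m generalizing k with
  | zero => exact contDiff_zero.2 (hd k).continuous
  | succ m ih =>
    push_cast
    refine contDiff_succ_iff_deriv.2 ⟨hd k, by simp, ?_⟩
    have : deriv (gaussSeries a k) = gaussSeries a (k + 1) :=
      funext fun x => (hasDerivAt_gaussSeries ha hs k x).deriv
    rw [this]
    exact ih (k + 1)

lemma mderiv_gaussSeries {a : ℕ → ℝ} (ha : ∀ n, 0 ≤ a n) (hs : Summable a) (β : Fin 1 → ℕ) :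
    mderiv β (fun x => gaussSeries a 0 (x 0)) = fun x => gaussSeries a (β 0) (x 0) := by
  have hstep : ∀ k, pderivOp (0 : Fin 1) (fun x => gaussSeries a k (x 0))
      = fun x => gaussSeries a (k + 1) (x 0) := by
    intro k
    funext x
    have h1 : HasFDerivAt (fun x : Fin 1 → ℝ => x 0)
        (ContinuousLinearMap.proj (R := ℝ) (φ := fun _ : Fin 1 => ℝ) 0) x :=
      (ContinuousLinearMap.proj (R := ℝ) (φ := fun _ : Fin 1 => ℝ) 0).hasFDerivAt
    have h2 := (hasDerivAt_gaussSeries ha hs k (x 0)).comp_hasFDerivAt x h1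
    have h3 : fderiv ℝ (fun x : Fin 1 → ℝ => gaussSeries a k (x 0)) x = _ := h2.fderiv
    rw [pderivOp, h3]
    simp
  have hiter : ∀ m, (pderivOp (0 : Fin 1))^[m] (fun x => gaussSeries a 0 (x 0))
      = fun x => gaussSeries a m (x 0) := by
    intro m
    induction m with
    | zero => rfl
    | succ m ih => rw [Function.iterate_succ_apply', ih, hstep]
  simp [mderiv, List.finRange_succ, hiter]

/-- The class `S_{ω}(ℝ)` contains a function whose values at the integers `n` are at least
`exp (-A * ω n)`. -/
lemma exists_mem_slow_decay {ω : ℝ → ℝ} (hω : IsWeightFun ω) :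
    ∃ A, 0 ≤ A ∧ ∃ f ∈ SRoumieuW ω 1,
      ∀ n : ℕ, Real.exp (-(A * ω n)) ≤ f (fun _ => (n : ℝ)) := by
  obtain ⟨l, hl, K, hK, hKb⟩ := gaussian_pow_le_wWeight hω
  obtain ⟨A, hA, E, hE⟩ := pow_le_wWeight_mul_exp hω.toIsGenWeightFun
  have hS := summable_exp_neg hω.toIsGenWeightFun
  set a : ℕ → ℝ := fun n => Real.exp (-((A + 1) * ω n)) with ha_def
  have ha : ∀ n, 0 ≤ a n := fun n => (Real.exp_pos _).le
  have ha_le : ∀ n, a n ≤ Real.exp (-ω n) := by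
    intro n
    refine Real.exp_le_exp.2 ?_
    nlinarith [mul_nonneg hA (hω.nonneg n (Nat.cast_nonneg n))]
  have hs : Summable a := hS.of_nonneg_of_le ha ha_le
  refine ⟨A + 1, by linarith, fun x => gaussSeries a 0 (x 0), ⟨?_, l, by linarith, ?_⟩, ?_⟩
  · exact (contDiff_gaussSeries ha hs 0).comp (contDiff_apply ℝ ℝ (0 : Fin 1))
  · set S : ℝ := ∑' n : ℕ, Real.exp (-ω n) with hSdef
    have hS0 : 0 < S := hS.tsum_pos (fun n => (Real.exp_pos _).le) 0 (Real.exp_pos _)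
    refine ⟨S * (Real.exp E + 2 * K), by positivity, fun α β x => ?_⟩
    rw [mderiv_gaussSeries ha hs]
    simp only [mpow, msize, Finset.univ_unique, Fin.default_eq_zero, Finset.prod_singleton,
      Finset.sum_singleton]
    generalize α 0 = p
    generalize β 0 = q
    generalize x 0 = y
    rw [gaussSeries, ← tsum_mul_left]
    set W := wWeight ω l (p + q) with hW
    have hW0 : 0 < W := wWeight_pos _ _ _
    have hterm : ∀ n : ℕ, ‖y ^ p * (a n * gaussD q (y - n))‖
        ≤ Real.exp (-ω n) * ((Real.exp E + 2 * K) * W) := by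
      intro n
      have hn : (0 : ℝ) ≤ n := Nat.cast_nonneg n
      have h1 : |y| ≤ n + |y - n| := by
        have := abs_add_le (n : ℝ) (y - n)
        rwa [add_sub_cancel, abs_of_nonneg hn] at this
      have h2 := abs_pow_mul_gaussD_le p q hn h1
      have h3 := hE l hl (p + q) n
      have h4 := hKb (p + q)
      calc ‖y ^ p * (a n * gaussD q (y - n))‖ = a n * (|y| ^ p * |gaussD q (y - n)|) := by
            rw [norm_mul, norm_mul, norm_pow, Real.norm_of_nonneg (ha n), Real.norm_eq_abs,
              Real.norm_eq_abs]; ring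
        _ ≤ a n * (W * Real.exp (A * ω n + E) + 2 * (K * W)) := by
            refine mul_le_mul_of_nonneg_left (h2.trans ?_) (ha n)
            gcongr
        _ = Real.exp (-ω n) * Real.exp E * W + a n * (2 * (K * W)) := by
            have : a n * Real.exp (A * ω n + E) = Real.exp (-ω n) * Real.exp E := by
              rw [ha_def, ← Real.exp_add, ← Real.exp_add]; congr 1; ring
            rw [← this]; ring
        _ ≤ Real.exp (-ω n) * Real.exp E * W + Real.exp (-ω n) * (2 * (K * W)) := by
            gcongr; exact ha_le n
        _ = _ := by ring
    have := tsum_of_norm_bounded (hS.mul_right ((Real.exp E + 2 * K) * W)).hasSum hterm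
    rw [tsum_mul_right, Real.norm_eq_abs] at this
    rw [mul_assoc]
    exact this
  · intro n
    have h := (summable_gaussSeries ha hs 0 n).le_tsum n
      (fun m _ => mul_nonneg (ha m) (by simp only [gaussD]; positivity))
    simpa [gaussSeries, gaussD, ha_def] using h

/-! ### Decay forced by the class of `σ` -/

/-- A nondecreasing convex function on `[0, ∞)` has a nonnegative subgradient at interior
points. -/
lemma exists_subgradient {φ : ℝ → ℝ} (hφ : ConvexOn ℝ (Set.Ici 0) φ)
    (hm : MonotoneOn φ (Set.Ici 0)) {x : ℝ} (hx : 0 < x) :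
    ∃ s, 0 ≤ s ∧ ∀ y, 0 ≤ y → φ x + s * (y - x) ≤ φ y := by
  have hi : x ∈ interior (Set.Ici (0 : ℝ)) := by simpa using hx
  have hx' : x ∈ Set.Ici (0 : ℝ) := hx.le
  have hleft : ∀ y, 0 ≤ y → y < x → slope φ y x ≤ derivWithin φ (Set.Ioi x) x := fun y hy hyx =>
    (hφ.slope_le_leftDeriv_of_mem_interior hy hi hyx).trans
      (hφ.leftDeriv_le_rightDeriv_of_mem_interior hi)
  refine ⟨derivWithin φ (Set.Ioi x) x, ?_, fun y hy => ?_⟩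
  · refine le_trans ?_ (hleft 0 le_rfl hx)
    rw [slope_def_field]
    exact div_nonneg (sub_nonneg.2 (hm (Set.mem_Ici.2 le_rfl) hx' hx.le)) (by linarith)
  · rcases lt_trichotomy y x with h | rfl | h
    · have := hleft y hy h
      rw [slope_def_field, div_le_iff₀ (by linarith)] at this
      linarith
    · simp
    · have := hφ.rightDeriv_le_slope_of_mem_interior hi hy h
      rw [slope_def_field, le_div_iff₀ (by linarith)] at this
      linarith

/-- Biduality of the Young conjugate restricted to integer arguments, at the cost of one factor
`t`: the exponent `k` is the integer part of a subgradient at `log t`. -/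
lemma exists_wWeight_le {σ : ℝ → ℝ} (hσ : IsGenWeightFun σ) {l : ℝ} (hl : 0 < l) {t : ℝ}
    (ht : 1 < t) : ∃ k : ℕ, wWeight σ l k ≤ t ^ (k + 1) * Real.exp (-(σ t / l)) := by
  have ht0 : 0 < t := by linarith
  have hx := Real.log_pos ht
  obtain ⟨s, hs, hsub⟩ := exists_subgradient hσ.delta (fun a _ b _ hab =>
    hσ.mono (Real.exp_pos a).le (Real.exp_pos b).le (Real.exp_le_exp.2 hab)) hx
  simp only [Real.exp_log ht0] at hsub
  have hsl : 0 ≤ s / l := by positivity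
  refine ⟨⌊s / l⌋₊, wWeight_le hl _ (by positivity) fun u hu => ?_⟩
  have hu0 : 0 < u := by linarith
  set k := ⌊s / l⌋₊
  have hk1 : (k : ℝ) ≤ s / l := Nat.floor_le hsl
  have hk2 : s / l ≤ k + 1 := (Nat.lt_floor_add_one _).le
  have h := hsub (Real.log u) (Real.log_nonneg hu)
  rw [Real.exp_log hu0] at h
  have pw : ∀ v : ℝ, 0 < v → ∀ m : ℕ, v ^ m = Real.exp (m * Real.log v) := by
    intro v hv m; rw [Real.exp_nat_mul, Real.exp_log hv]
  rw [pw u hu0, pw t ht0, ← Real.exp_add, ← Real.exp_add]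
  refine Real.exp_le_exp.2 ?_
  have h' : σ t / l + s / l * (Real.log u - Real.log t) ≤ σ u / l := by
    have := div_le_div_of_nonneg_right h hl.le
    rw [add_div] at this
    linarith [mul_div_right_comm s (Real.log u - Real.log t) l]
  have e1 := mul_le_mul_of_nonneg_right hk1 (Real.log_nonneg hu)
  have e2 := mul_le_mul_of_nonneg_right hk2 hx.le
  push_cast
  linarith

theorem isBigO_of_roumieu_subset {ω σ : ℝ → ℝ} (hω : IsWeightFun ω) (hσ : IsGenWeightFun σ)
    (h : SRoumieuW ω 1 ⊆ SRoumieuW σ 1) : σ =O[atTop] ω := by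
  obtain ⟨A, hA, f, hf, hlow⟩ := exists_mem_slow_decay hω
  obtain ⟨-, l, hl, C, hC, hb⟩ := h hf
  obtain ⟨L, hL, ha⟩ := hω.alpha
  have hnat : ∀ n : ℕ, 2 ≤ n → σ n ≤ l * (A * ω n + Real.log n + Real.log C) := by
    intro n hn
    have hn1 : (1 : ℝ) < n := by exact_mod_cast hn
    have hn0 : (0 : ℝ) < n := by linarith
    obtain ⟨k, hk⟩ := exists_wWeight_le hσ hl hn1
    have h1 := hb (fun _ => k) (fun _ => 0) (fun _ => n)
    simp only [mpow, msize, mderiv, Finset.univ_unique, Finset.prod_singleton,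
      Finset.sum_singleton, add_zero, List.finRange_succ, List.finRange_zero,
      List.map_nil, List.foldr_cons, List.foldr_nil, Function.iterate_zero, id_eq] at h1
    have h2 : (n : ℝ) ^ k * Real.exp (-(A * ω n))
        ≤ C * ((n : ℝ) ^ (k + 1) * Real.exp (-(σ n / l))) := by
      calc (n : ℝ) ^ k * Real.exp (-(A * ω n)) ≤ (n : ℝ) ^ k * f (fun _ => (n : ℝ)) := by
            gcongr; exact hlow n
        _ ≤ _ := (le_abs_self _).trans h1
        _ ≤ _ := by gcongr
    have h3 : Real.exp (-(A * ω n)) ≤ C * n * Real.exp (-(σ n / l)) := by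
      refine le_of_mul_le_mul_left (h2.trans_eq ?_) (pow_pos hn0 k)
      ring
    have h4 : Real.exp (-(A * ω n)) ≤ Real.exp (Real.log C + Real.log n + -(σ n / l)) := by
      rwa [Real.exp_add, Real.exp_add, Real.exp_log hC, Real.exp_log hn0]
    have h5 := Real.exp_le_exp.1 h4
    have h6 : σ n / l ≤ A * ω n + Real.log n + Real.log C := by linarith
    rw [div_le_iff₀ hl] at h6
    linarith
  have hlog := hω.gamma.def (c := 1) one_pos
  obtain ⟨T, hT⟩ := eventually_atTop.1 hlog
  -- For large `t`, condition (γ) gives `1 ≤ log t ≤ ω t`, so constants are absorbed by `ω t`.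
  refine IsBigO.of_bound (l * ((A + 1) * (2 * L) + |Real.log C|)) ?_
  filter_upwards [eventually_ge_atTop T, eventually_ge_atTop (Real.exp 1)] with t h1 h2
  have he : 2 ≤ Real.exp 1 := by linarith [Real.add_one_le_exp (1 : ℝ)]
  have ht0 : 0 < t := by linarith
  set n := ⌈t⌉₊
  have htn : t ≤ n := Nat.le_ceil t
  have hnt : (n : ℝ) ≤ 2 * t := by linarith [Nat.ceil_lt_add_one ht0.le]
  have hn2 : 2 ≤ n := by exact_mod_cast (by linarith : (2 : ℝ) ≤ n)
  have hw : ∀ u, T ≤ u → Real.exp 1 ≤ u → 1 ≤ Real.log u ∧ Real.log u ≤ ω u := by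
    intro u hu hu'
    have h3 : 1 ≤ Real.log u := (Real.le_log_iff_exp_le (by linarith)).2 hu'
    have h4 := hT u hu
    rw [Real.norm_of_nonneg (by linarith), Real.norm_of_nonneg (hω.nonneg u (by linarith)),
      one_mul] at h4
    exact ⟨h3, h4⟩
  have hwt := hw t h1 h2
  have hwn := hw n (h1.trans htn) (h2.trans htn)
  have hωn : ω n ≤ 2 * L * ω t := by
    have e1 := hω.mono (Set.mem_Ici.2 (Nat.cast_nonneg n)) (Set.mem_Ici.2 (by linarith)) hnt
    have e2 := ha t ht0.le
    nlinarith
  have hσt : σ t ≤ σ n := hσ.mono ht0.le (Set.mem_Ici.2 (Nat.cast_nonneg n)) htn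
  rw [Real.norm_of_nonneg (hσ.nonneg t ht0.le), Real.norm_of_nonneg (hω.nonneg t ht0.le),
    mul_assoc]
  refine (hσt.trans (hnat n hn2)).trans (mul_le_mul_of_nonneg_left ?_ hl.le)
  have e3 : Real.log C ≤ |Real.log C| * ω t :=
    (le_abs_self _).trans (le_mul_of_one_le_right (abs_nonneg _) (by linarith))
  have e4 : (A + 1) * ω n ≤ (A + 1) * (2 * L * ω t) :=
    mul_le_mul_of_nonneg_left hωn (by linarith)
  nlinarith

/-- Theorem `Gelfand-inclusion3`: let `ω` be a non-quasianalytic weight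
function and `σ` a general weight function; then `σ(t) = O(ω(t))` iff
`S_{{ω}}(ℝ^d) ⊆ S_{{σ}}(ℝ^d)` for every `d`; the forward implication holds for arbitrary
general weight functions and the converse needs only `d = 1`. -/
theorem roumieu_inclusion_nonquasianalytic_weight_functions (ω σ : ℝ → ℝ) :
    ((IsGenWeightFun ω ∧ IsGenWeightFun σ ∧ σ =O[Filter.atTop] ω) →
      ∀ d : ℕ, 0 < d → SRoumieuW ω d ⊆ SRoumieuW σ d) ∧
    (IsWeightFun ω → MeasureTheory.IntegrableOn (fun t => ω t / t ^ 2) (Set.Ici 1) →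
      IsGenWeightFun σ →
      ((σ =O[Filter.atTop] ω ↔ ∀ d : ℕ, 0 < d → SRoumieuW ω d ⊆ SRoumieuW σ d) ∧
        (SRoumieuW ω 1 ⊆ SRoumieuW σ 1 → σ =O[Filter.atTop] ω))) := by
  refine ⟨fun h d _ => roumieu_subset_of_isBigO h.1 h.2.1 h.2.2 d, fun hω _ hσ => ?_⟩
  exact ⟨⟨fun h d _ => roumieu_subset_of_isBigO hω.toIsGenWeightFun hσ h d,
    fun h => isBigO_of_roumieu_subset hω hσ (h 1 one_pos)⟩, isBigO_of_roumieu_subset hω hσ⟩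
end

section
/- Let M=(M_p)_{p∈ℕ_0} and N=(N_p)_{p∈ℕ_0} be sequences of positive reals. If M◁N, then S_{{M}}(ℝ^d) ⊆ S_{(N)}(ℝ^d) for every dimension d∈ℕ. Conversely, if M∈LC is non-quasianalytic (i.e. ∑_{p≥1} M_{p−1}/M_p < ∞) and S_{{M}}(ℝ) ⊆ S_{(N)}(ℝ) (dimension d=1), then M◁N. -/
open Filter Asymptotics

/-! If `M ◁ N`, then for every `ε > 0` there is `C` with `M_p ≤ C ε^p N_p` for all `p`
(`seqLtriangle.bound`), so a bound with weights `h^p M_p` turns into one with weights `k^p N_p` for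
every `k > 0`.

For the converse it suffices to have one `f ∈ S_{{M}}(ℝ)` with `M_j ≤ |f^(j)(0)|` for all `j`:
the Beurling estimates at the origin then give `M_j ≤ C ε^j N_j` for every `ε > 0`, which is
`M ◁ N` (`seqLtriangle_of_bound`). Such an `f` is a product `φ θ`, where

* `θ = ∑ M_k (2 r_k)^{-k} (cos (2 r_k x) + sin (2 r_k x))`, with `r_k = M_{k+1} / M_k`, is a
  characteristic function of the class (`exists_characteristic`): log-convexity gives
  `M_k r_k^{j-k} ≤ M_j`, which bounds `θ^(j)` by `4 · 2^j M_j`, while at `0` all terms of `θ^(j)`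
  have the same sign and the term `k = j` equals `M_j` in absolute value;
* `φ` is a compactly supported function of class `M`, equal to `1` near `0` (`exists_cutoff`). It
  is the limit of successive moving averages, with radii proportional to `M_k / M_{k+1}`, of a
  smooth plateau function. The radii are summable by non-quasianalyticity, which keeps the plateau
  and the support under control, and averaging with radius `h` bounds one derivative at the cost
  of a factor `1 / h`, so that `φ^(j)` is bounded by a geometric factor times `M_j`.

The Leibniz rule together with `M_p M_q ≤ M_{p+q}` keeps `φ θ` in the class, and since it has
compact support the factors `x^α` only contribute geometrically.
-/

/-! ### Termwise differentiation on the line -/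

theorem series_smooth {f : ℕ → ℝ → ℝ} {v : ℕ → ℕ → ℝ}
    (hf : ∀ i, ContDiff ℝ (⊤ : ℕ∞) (f i)) (hv : ∀ k, Summable (v k))
    (h : ∀ k i x, |iteratedDeriv k (f i) x| ≤ v k i) :
    ContDiff ℝ (⊤ : ℕ∞) (fun x => ∑' i, f i x) ∧
      ∀ k x, iteratedDeriv k (fun y => ∑' i, f i y) x = ∑' i, iteratedDeriv k (f i) x := by
  have h' : ∀ (k : ℕ) (i : ℕ) (x : ℝ), (k : ℕ∞) ≤ ⊤ → ‖iteratedFDeriv ℝ k (f i) x‖ ≤ v k i := by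
    intro k i x _
    rw [norm_iteratedFDeriv_eq_norm_iteratedDeriv]
    exact h k i x
  refine ⟨contDiff_tsum hf (fun k _ => hv k) h', fun k x => ?_⟩
  rw [iteratedDeriv_eq_iteratedFDeriv, iteratedFDeriv_tsum hf (fun k _ => hv k) h' le_top]
  have hs : Summable fun i => iteratedFDeriv ℝ k (f i) x :=
    Summable.of_norm_bounded (hv k) fun i => h' k i x le_top
  rw [ContinuousMultilinearMap.tsum_eval hs]
  simp only [iteratedDeriv_eq_iteratedFDeriv]

/-! ### Moving averages -/

/-- The moving average of `g` over intervals of radius `h`, i.e. the convolution of `g` with the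
uniform probability density on `[-h, h]`. -/
noncomputable def avg (h : ℝ) (g : ℝ → ℝ) : ℝ → ℝ := fun x => (2 * h)⁻¹ * ∫ t in (x - h)..(x + h), g t

theorem avg_hasDerivAt {g : ℝ → ℝ} (hg : Continuous g) (h x : ℝ) :
    HasDerivAt (avg h g) ((2 * h)⁻¹ * (g (x + h) - g (x - h))) x := by
  have e : avg h g = fun x => (2 * h)⁻¹ * ((∫ t in (0 : ℝ)..(x + h), g t) -
      ∫ t in (0 : ℝ)..(x - h), g t) := by
    funext y
    rw [avg, intervalIntegral.integral_interval_sub_left (hg.intervalIntegrable _ _)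
      (hg.intervalIntegrable _ _)]
  rw [e]
  have h1 := fun y => intervalIntegral.integral_hasDerivAt_right (hg.intervalIntegrable 0 y)
    (hg.stronglyMeasurableAtFilter _ _) hg.continuousAt
  exact (((h1 (x + h)).comp_add_const x h).sub ((h1 (x - h)).comp_sub_const x h)).const_mul _

theorem avg_deriv {g : ℝ → ℝ} (hg : ContDiff ℝ (⊤ : ℕ∞) g) (h : ℝ) :
    deriv (avg h g) = avg h (deriv g) := by
  funext x
  have hc : Continuous (deriv g) := (contDiff_infty_iff_deriv.1 hg).2.continuous
  rw [(avg_hasDerivAt hg.continuous h x).deriv, avg, intervalIntegral.integral_deriv_eq_sub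
    (fun y _ => (contDiff_infty_iff_deriv.1 hg).1 y) (hc.intervalIntegrable _ _)]

theorem smooth_deriv {g : ℝ → ℝ} (hg : ContDiff ℝ (⊤ : ℕ∞) g) :
    ∀ j, ContDiff ℝ (⊤ : ℕ∞) (iteratedDeriv j g)
  | 0 => by simpa using hg
  | j + 1 => by
    rw [iteratedDeriv_succ]
    exact (contDiff_infty_iff_deriv.1 (smooth_deriv hg j)).2

theorem avg_smooth {g : ℝ → ℝ} (hg : ContDiff ℝ (⊤ : ℕ∞) g) (h : ℝ) :
    ContDiff ℝ (⊤ : ℕ∞) (avg h g) := by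
  refine contDiff_infty_iff_deriv.2
    ⟨fun x => (avg_hasDerivAt hg.continuous h x).differentiableAt, ?_⟩
  have e : deriv (avg h g) = fun x => (2 * h)⁻¹ * (g (x + h) - g (x - h)) :=
    funext fun x => (avg_hasDerivAt hg.continuous h x).deriv
  rw [e]
  fun_prop

theorem avg_iteratedDeriv {g : ℝ → ℝ} (hg : ContDiff ℝ (⊤ : ℕ∞) g) (h : ℝ) (j : ℕ) :
    iteratedDeriv j (avg h g) = avg h (iteratedDeriv j g) := by
  induction j with
  | zero => simp
  | succ j ih => rw [iteratedDeriv_succ, ih, avg_deriv (smooth_deriv hg j), iteratedDeriv_succ]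

theorem avg_eq_const {g : ℝ → ℝ} {h x c : ℝ} (hh : 0 < h)
    (hg : ∀ t, |t - x| ≤ h → g t = c) : avg h g x = c := by
  have : ∫ t in (x - h)..(x + h), g t = ∫ t in (x - h)..(x + h), c := by
    refine intervalIntegral.integral_congr fun t ht => hg t ?_
    rw [Set.uIcc_of_le (by linarith)] at ht
    rw [abs_le]
    constructor <;> linarith [ht.1, ht.2]
  rw [avg, this, intervalIntegral.integral_const, smul_eq_mul]
  field_simp
  ring

theorem avg_sub_const_bound {g : ℝ → ℝ} {h x c B : ℝ} (hh : 0 < h) (hc : Continuous g)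
    (hg : ∀ t, |t - x| ≤ h → |g t - c| ≤ B) : |avg h g x - c| ≤ B := by
  have e : avg h g x - c = avg h (fun t => g t - c) x := by
    rw [avg, avg, intervalIntegral.integral_sub (hc.intervalIntegrable _ _)
      (intervalIntegrable_const), intervalIntegral.integral_const, smul_eq_mul]
    field_simp
    ring
  have h1 : ‖∫ t in (x - h)..(x + h), (g t - c)‖ ≤ B * |(x + h) - (x - h)| := by
    refine intervalIntegral.norm_integral_le_of_norm_le_const fun t ht => hg t ?_
    rw [Set.uIoc_of_le (by linarith)] at ht
    rw [abs_le]
    constructor <;> linarith [ht.1, ht.2]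
  rw [Real.norm_eq_abs, show (x + h) - (x - h) = 2 * h by ring,
    abs_of_pos (by linarith : 0 < 2 * h)] at h1
  rw [e, avg, abs_mul, abs_of_pos (by positivity : 0 < (2 * h)⁻¹)]
  calc (2 * h)⁻¹ * |∫ t in (x - h)..(x + h), (g t - c)| ≤ (2 * h)⁻¹ * (B * (2 * h)) := by gcongr
    _ = B := by field_simp

theorem avg_bound {g : ℝ → ℝ} {h B : ℝ} (hh : 0 < h) (hc : Continuous g)
    (hg : ∀ t, |g t| ≤ B) (x : ℝ) : |avg h g x| ≤ B := by
  simpa using avg_sub_const_bound (c := 0) (x := x) hh hc fun t _ => by simpa using hg t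

theorem avg_sub_bound {g : ℝ → ℝ} {h B : ℝ} (hh : 0 < h) (hg : ContDiff ℝ (⊤ : ℕ∞) g)
    (hB : ∀ t, |deriv g t| ≤ B) (x : ℝ) : |avg h g x - g x| ≤ h * B := by
  refine avg_sub_const_bound hh hg.continuous fun t ht => ?_
  have h1 := Convex.norm_image_sub_le_of_norm_deriv_le (𝕜 := ℝ) (f := g) (s := Set.univ)
    (C := B) (x := x) (y := t) (fun y _ => (contDiff_infty_iff_deriv.1 hg).1 y)
    (fun y _ => hB y) convex_univ trivial trivial
  have hB0 : 0 ≤ B := (abs_nonneg _).trans (hB 0)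
  calc |g t - g x| ≤ B * |t - x| := h1
    _ ≤ B * h := by gcongr
    _ = h * B := mul_comm _ _

theorem avg_deriv_bound {g : ℝ → ℝ} {h B : ℝ} (hh : 0 < h) (hc : Continuous g)
    (hg : ∀ t, |g t| ≤ B) (x : ℝ) : |deriv (avg h g) x| ≤ h⁻¹ * B := by
  rw [(avg_hasDerivAt hc h x).deriv, abs_mul, abs_of_pos (by positivity : 0 < (2 * h)⁻¹)]
  have : |g (x + h) - g (x - h)| ≤ 2 * B := by
    linarith [abs_sub (g (x + h)) (g (x - h)), hg (x + h), hg (x - h)]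
  calc (2 * h)⁻¹ * |g (x + h) - g (x - h)| ≤ (2 * h)⁻¹ * (2 * B) := by gcongr
    _ = h⁻¹ * B := by field_simp

/-! ### The cut-off function -/

/-- The functions obtained from `u` by averaging successively with radii `h 0, …, h (n - 1)`. -/
noncomputable def iterAvg (h : ℕ → ℝ) (u : ℝ → ℝ) : ℕ → ℝ → ℝ
  | 0 => u
  | n + 1 => avg (h n) (iterAvg h u n)

section iterAvg

variable {h : ℕ → ℝ} {u : ℝ → ℝ}

theorem iterAvg_smooth (hu : ContDiff ℝ (⊤ : ℕ∞) u) : ∀ n, ContDiff ℝ (⊤ : ℕ∞) (iterAvg h u n)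
  | 0 => hu
  | n + 1 => avg_smooth (iterAvg_smooth hu n) _

theorem iterAvg_bound (hh : ∀ k, 0 < h k) (hu : ContDiff ℝ (⊤ : ℕ∞) u) {j : ℕ} {B : ℝ} {m : ℕ}
    (hB : ∀ x, |iteratedDeriv j (iterAvg h u m) x| ≤ B) {n : ℕ} (hmn : m ≤ n) (x : ℝ) :
    |iteratedDeriv j (iterAvg h u n) x| ≤ B := by
  induction n, hmn using Nat.le_induction generalizing x with
  | base => exact hB x
  | succ n _ ih =>
    rw [iterAvg, avg_iteratedDeriv (iterAvg_smooth hu n)]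
    exact avg_bound (hh n) (smooth_deriv (iterAvg_smooth hu n) j).continuous ih x

/-- Each of the first `j` averages absorbs one derivative at the cost of a factor `1 / h k`. -/
theorem iterAvg_deriv_bound (hh : ∀ k, 0 < h k) (hu : ContDiff ℝ (⊤ : ℕ∞) u)
    (hu1 : ∀ x, |u x| ≤ 1) (j : ℕ) (x : ℝ) :
    |iteratedDeriv j (iterAvg h u j) x| ≤ ∏ k ∈ Finset.range j, (h k)⁻¹ := by
  induction j generalizing x with
  | zero => simpa [iterAvg] using hu1 x
  | succ j ih =>
    rw [iterAvg, iteratedDeriv_succ, avg_iteratedDeriv (iterAvg_smooth hu j),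
      Finset.prod_range_succ, mul_comm]
    exact avg_deriv_bound (hh j) (smooth_deriv (iterAvg_smooth hu j) j).continuous ih x

theorem iterAvg_eq_one (hh : ∀ k, 0 < h k) (hu : ∀ x, |x| ≤ 2 → u x = 1) (n : ℕ) (x : ℝ)
    (hx : |x| + ∑ k ∈ Finset.range n, h k ≤ 2) : iterAvg h u n x = 1 := by
  induction n generalizing x with
  | zero => exact hu x (by simpa using hx)
  | succ n ih =>
    refine avg_eq_const (hh n) fun t ht => ih t ?_
    rw [Finset.sum_range_succ] at hx
    have := abs_sub_abs_le_abs_sub t x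
    linarith

theorem iterAvg_eq_zero (hh : ∀ k, 0 < h k) (hu : ∀ x, 3 ≤ |x| → u x = 0) (n : ℕ) (x : ℝ)
    (hx : 3 + ∑ k ∈ Finset.range n, h k ≤ |x|) : iterAvg h u n x = 0 := by
  induction n generalizing x with
  | zero => exact hu x (by simpa using hx)
  | succ n ih =>
    refine avg_eq_const (hh n) fun t ht => ih t ?_
    rw [Finset.sum_range_succ] at hx
    have := abs_sub_abs_le_abs_sub x t
    rw [abs_sub_comm] at this
    linarith

end iterAvg

/-- The sufficiency part of the Denjoy–Carleman theorem: averaging a plateau function with all the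
radii `h k` gives a cut-off function whose `j`-th derivative is at most `∏ k < j, 1 / h k`. -/
theorem exists_cutoff {h : ℕ → ℝ} (hh : ∀ k, 0 < h k) (hs : Summable h) (hs1 : ∑' k, h k ≤ 1) :
    ∃ φ : ℝ → ℝ, ContDiff ℝ (⊤ : ℕ∞) φ ∧ (∀ x, |x| ≤ 1 → φ x = 1) ∧ (∀ x, 4 ≤ |x| → φ x = 0) ∧
      ∀ j x, |iteratedDeriv j φ x| ≤ ∏ k ∈ Finset.range j, (h k)⁻¹ := by
  let b : ContDiffBump (0 : ℝ) := ⟨2, 3, by norm_num, by norm_num⟩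
  let u : ℝ → ℝ := b
  have hu : ContDiff ℝ (⊤ : ℕ∞) u := b.contDiff
  have hu1 : ∀ x, |u x| ≤ 1 := fun x => by
    rw [abs_of_nonneg b.nonneg]
    exact b.le_one
  have hone : ∀ x, |x| ≤ 2 → u x = 1 := fun x hx =>
    b.one_of_mem_closedBall (by simpa [b] using hx)
  have hzero : ∀ x, 3 ≤ |x| → u x = 0 := fun x hx =>
    b.zero_of_le_dist (by simpa [b] using hx)
  have hB : ∀ j, ∃ B, ∀ x, |iteratedDeriv j u x| ≤ B := fun j => by
    have hcs : HasCompactSupport (iteratedDeriv j u) := by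
      have := HasCompactSupport.iteratedFDeriv (𝕜 := ℝ) b.hasCompactSupport j
      refine this.mono fun x hx => ?_
      rw [Function.mem_support] at hx ⊢
      intro h0
      exact hx (by rw [iteratedDeriv_eq_iteratedFDeriv]; exact congrArg (· fun _ => 1) h0)
    exact (hcs.exists_bound_of_continuous (smooth_deriv hu j).continuous)
  choose B hB using hB
  let F := iterAvg h u
  have hF : ∀ n, ContDiff ℝ (⊤ : ℕ∞) (F n) := iterAvg_smooth hu
  have hFB : ∀ j n x, |iteratedDeriv j (F n) x| ≤ B j := fun j n x =>
    iterAvg_bound hh hu (m := 0) (hB j) (Nat.zero_le n) x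
  have hsub : ∀ k i x, iteratedDeriv k (F (i + 1) - F i) x =
      iteratedDeriv k (F (i + 1)) x - iteratedDeriv k (F i) x := fun k i x =>
    iteratedDeriv_sub ((hF _).contDiffAt.of_le (by exact_mod_cast le_top))
      ((hF _).contDiffAt.of_le (by exact_mod_cast le_top))
  have hdiff : ∀ k i x, |iteratedDeriv k (F (i + 1) - F i) x| ≤ h i * B (k + 1) := by
    intro k i x
    rw [hsub, show F (i + 1) = avg (h i) (F i) from rfl, avg_iteratedDeriv (hF i)]
    refine avg_sub_bound (hh i) (smooth_deriv (hF i) k) (fun t => ?_) x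
    rw [← iteratedDeriv_succ]
    exact hFB _ _ _
  have hsum : ∀ k, Summable fun i => h i * B (k + 1) := fun k => hs.mul_right _
  obtain ⟨hS, hSd⟩ := series_smooth (f := fun i => F (i + 1) - F i)
    (fun i => (hF _).sub (hF _)) hsum hdiff
  let φ : ℝ → ℝ := u + fun x => ∑' i, (F (i + 1) - F i) x
  -- Telescoping identifies the derivatives of the sum with the limits of those of `F n`.
  have hlim : ∀ j x, Tendsto (fun n => iteratedDeriv j (F n) x) atTop
      (nhds (iteratedDeriv j φ x)) := by
    intro j x
    have h1 : iteratedDeriv j φ x = iteratedDeriv j u x +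
        ∑' i, iteratedDeriv j (F (i + 1) - F i) x := by
      rw [← hSd]
      exact iteratedDeriv_add (hu.contDiffAt.of_le (by exact_mod_cast le_top))
        (hS.contDiffAt.of_le (by exact_mod_cast le_top))
    have h2 := (Summable.of_norm_bounded
      (f := fun i => iteratedDeriv j (F (i + 1) - F i) x) (hsum j) fun i => hdiff j i x).hasSum.tendsto_sum_nat
    have h3 := h2.const_add (iteratedDeriv j u x)
    rw [← h1] at h3
    refine h3.congr fun n => ?_
    simp only [hsub]
    rw [Finset.sum_range_sub (fun i => iteratedDeriv j (F i) x)]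
    change _ + (_ - iteratedDeriv j u x) = _
    ring
  have hpart : ∀ n, ∑ k ∈ Finset.range n, h k ≤ 1 := fun n =>
    (hs.sum_le_tsum _ fun k _ => (hh k).le).trans hs1
  refine ⟨φ, hu.add hS, fun x hx => ?_, fun x hx => ?_, fun j x => ?_⟩
  · refine tendsto_nhds_unique (by simpa using hlim 0 x) (tendsto_const_nhds.congr fun n => ?_)
    exact (iterAvg_eq_one hh hone n x (by linarith [hpart n])).symm
  · refine tendsto_nhds_unique (by simpa using hlim 0 x) (tendsto_const_nhds.congr fun n => ?_)
    exact (iterAvg_eq_zero hh hzero n x (by linarith [hpart n])).symm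
  · refine le_of_tendsto (hlim j x).abs (eventually_atTop.2 ⟨j, fun n hn => ?_⟩)
    exact iterAvg_bound hh hu (iterAvg_deriv_bound hh hu hu1 j) hn x

/-! ### Log-convex sequences -/

section LC

variable {M : ℕ → ℝ}

theorem IsLC.ratio_mono (hM : IsLC M) : Monotone fun k => M (k + 1) / M k := by
  refine monotone_nat_of_le_succ fun k => ?_
  rw [div_le_div_iff₀ (hM.pos _) (hM.pos _)]
  have := hM.logConvex k
  nlinarith

theorem IsLC.ratio_pos (hM : IsLC M) (k : ℕ) : 0 < M (k + 1) / M k :=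
  div_pos (hM.pos _) (hM.pos _)

theorem IsLC.succ_eq (hM : IsLC M) (k : ℕ) : M (k + 1) = M k * (M (k + 1) / M k) := by
  have := (hM.pos k).ne'
  field_simp

theorem IsLC.mul_le (hM : IsLC M) (p q : ℕ) : M p * M q ≤ M (p + q) := by
  induction p with
  | zero => simp [hM.norm0]
  | succ p ih =>
    have h1 := hM.ratio_mono (Nat.le_add_right p q)
    have h2 := hM.ratio_pos p
    have h3 := hM.pos (p + q)
    rw [hM.succ_eq p, show p + 1 + q = p + q + 1 by ring, hM.succ_eq (p + q)]
    calc M p * (M (p + 1) / M p) * M q = M p * M q * (M (p + 1) / M p) := by ring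
      _ ≤ M (p + q) * (M (p + q + 1) / M (p + q)) := by
        gcongr

theorem IsLC.one_le (hM : IsLC M) (p : ℕ) : 1 ≤ M p := by
  induction p with
  | zero => exact hM.norm0.ge
  | succ p ih =>
    have := hM.mul_le p 1
    have := hM.norm1
    nlinarith

/-- The tangent-line form of log-convexity: `M_k r_k ^ (j - k) ≤ M_j` with
`r_k = M_{k+1} / M_k`. -/
theorem IsLC.tangent (hM : IsLC M) (k j : ℕ) :
    M k * (M (k + 1) / M k) ^ j ≤ M j * (M (k + 1) / M k) ^ k := by
  set r := M (k + 1) / M k with hr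
  have hr0 : 0 < r := hM.ratio_pos k
  rcases le_total k j with hkj | hkj
  · induction j, hkj using Nat.le_induction with
    | base => exact le_rfl
    | succ j hkj ih =>
      have h1 : r ≤ M (j + 1) / M j := hM.ratio_mono hkj
      have h2 := hM.pos j
      rw [hM.succ_eq j]
      calc M k * r ^ (j + 1) = M k * r ^ j * r := by ring
        _ ≤ M j * r ^ k * (M (j + 1) / M j) := by gcongr
        _ = _ := by ring
  · induction hkj using Nat.decreasingInduction with
    | self => exact le_rfl
    | of_succ j hkj ih =>
      have h1 : M (j + 1) / M j ≤ r := hM.ratio_mono hkj.le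
      have h2 := hM.pos j
      have h3 : M k * r ^ j * r ≤ M j * r ^ k * r := by
        calc M k * r ^ j * r = M k * r ^ (j + 1) := by ring
          _ ≤ M (j + 1) * r ^ k := ih
          _ = M j * (M (j + 1) / M j) * r ^ k := by rw [← hM.succ_eq]
          _ ≤ M j * r * r ^ k := by gcongr
          _ = _ := by ring
      exact le_of_mul_le_mul_right h3 hr0

/-! ### A function with large derivatives at the origin -/

/-- The signs depend on the order `j` only, so that the derivatives at `0` of a sum of such
functions with positive coefficients do not cancel. -/
theorem trig_iteratedDeriv (j : ℕ) : ∃ p q : ℝ, |p| = 1 ∧ |q| = 1 ∧ ∀ a b : ℝ,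
    iteratedDeriv j (fun x => a * (Real.cos (b * x) + Real.sin (b * x))) =
      fun x => a * b ^ j * (p * Real.cos (b * x) + q * Real.sin (b * x)) := by
  induction j with
  | zero => exact ⟨1, 1, by simp, by simp, fun a b => by simp⟩
  | succ j ih =>
    obtain ⟨p, q, hp, hq, h⟩ := ih
    refine ⟨q, -p, hq, by rwa [abs_neg], fun a b => ?_⟩
    rw [iteratedDeriv_succ, h]
    funext x
    have hb : HasDerivAt (fun x => b * x) b x := by simpa using (hasDerivAt_id x).const_mul b
    have := ((hb.cos.const_mul p).add (hb.sin.const_mul q)).const_mul (a * b ^ j)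
    refine this.deriv.trans ?_
    ring

/-- A characteristic function of the class `M`: the series
`∑ M_k (2 r_k)^{-k} (cos (2 r_k x) + sin (2 r_k x))` with `r_k = M_{k+1} / M_k`. -/
theorem exists_characteristic (hM : IsLC M) :
    ∃ θ : ℝ → ℝ, ContDiff ℝ (⊤ : ℕ∞) θ ∧ (∀ j, M j ≤ |iteratedDeriv j θ 0|) ∧
      ∀ j x, |iteratedDeriv j θ x| ≤ 4 * 2 ^ j * M j := by
  let b : ℕ → ℝ := fun k => 2 * (M (k + 1) / M k)
  let a : ℕ → ℝ := fun k => M k / b k ^ k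
  have hb : ∀ k, 0 < b k := fun k => by have := hM.ratio_pos k; positivity
  have ha : ∀ k, 0 < a k := fun k => by have := hM.pos k; have := hb k; positivity
  have hab : ∀ k j, a k * b k ^ j ≤ M j * 2 ^ j * (1 / 2) ^ k := by
    intro k j
    have h1 := hM.tangent k j
    have h2 := hM.ratio_pos k
    have hbk := hb k
    simp only [a]
    rw [div_mul_eq_mul_div, div_le_iff₀ (by positivity)]
    simp only [b, mul_pow]
    calc M k * (2 ^ j * (M (k + 1) / M k) ^ j) = 2 ^ j * (M k * (M (k + 1) / M k) ^ j) := by ring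
      _ ≤ 2 ^ j * (M j * (M (k + 1) / M k) ^ k) := by gcongr
      _ = M j * 2 ^ j * ((1 / 2) ^ k * 2 ^ k) * (M (k + 1) / M k) ^ k := by
        rw [← mul_pow]; norm_num; ring
      _ = _ := by ring
  let f : ℕ → ℝ → ℝ := fun k x => a k * (Real.cos (b k * x) + Real.sin (b k * x))
  have hf : ∀ k, ContDiff ℝ (⊤ : ℕ∞) (f k) := fun k => by fun_prop
  let v : ℕ → ℕ → ℝ := fun j k => 2 * (M j * 2 ^ j * (1 / 2) ^ k)
  have hgeo : ∀ j, HasSum (v j) (4 * 2 ^ j * M j) := fun j => by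
    rw [show 4 * 2 ^ j * M j = 2 * (M j * 2 ^ j * 2) by ring]
    exact (hasSum_geometric_two.mul_left (M j * 2 ^ j)).mul_left 2
  have hv : ∀ j k x, |iteratedDeriv j (f k) x| ≤ v j k := by
    intro j k x
    obtain ⟨p, q, hp, hq, h⟩ := trig_iteratedDeriv j
    have hbk := hb k
    have hak := ha k
    have h3 : |p * Real.cos (b k * x) + q * Real.sin (b k * x)| ≤ 2 := by
      refine (abs_add_le _ _).trans ?_
      rw [abs_mul, abs_mul, hp, hq]
      linarith [Real.abs_cos_le_one (b k * x), Real.abs_sin_le_one (b k * x)]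
    rw [show iteratedDeriv j (f k) = _ from h _ _, abs_mul,
      abs_of_pos (by positivity : 0 < a k * b k ^ j)]
    calc a k * b k ^ j * |p * Real.cos (b k * x) + q * Real.sin (b k * x)|
        ≤ (a k * b k ^ j) * 2 := by gcongr
      _ ≤ (M j * 2 ^ j * (1 / 2) ^ k) * 2 := mul_le_mul_of_nonneg_right (hab k j) zero_le_two
      _ = v j k := mul_comm _ _
  obtain ⟨hS, hSd⟩ := series_smooth hf (fun j => (hgeo j).summable) hv
  refine ⟨_, hS, fun j => ?_, fun j x => ?_⟩
  · obtain ⟨p, q, hp, hq, h⟩ := trig_iteratedDeriv j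
    have hsum : Summable fun k => a k * b k ^ j := by
      refine Summable.of_nonneg_of_le (fun k => ?_) (fun k => hab k j)
        ((hasSum_geometric_two).mul_left (M j * 2 ^ j)).summable
      have := hb k
      have := ha k
      positivity
    have h0 : ∀ k, iteratedDeriv j (f k) 0 = a k * b k ^ j * p := fun k => by
      rw [show iteratedDeriv j (f k) = _ from h _ _]
      simp
    rw [hSd]
    simp only [h0]
    rw [tsum_mul_right, abs_mul, hp, mul_one]
    have h4 : a j * b j ^ j ≤ ∑' k, a k * b k ^ j := hsum.le_tsum j fun k _ => by
      have := hb k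
      have := ha k
      positivity
    have h5 : a j * b j ^ j = M j := by
      have := (hb j).ne'
      simp only [a]
      field_simp
    exact h5 ▸ h4.trans (le_abs_self _)
  · rw [hSd]
    exact tsum_of_norm_bounded (f := fun k => iteratedDeriv j (f k) x) (hgeo j) fun k => hv j k x

/-- For non-quasianalytic `M`, cutting off a characteristic function gives a compactly supported
function of class `M` that still has large derivatives at `0`. -/
theorem exists_compact_characteristic (hM : IsLC M) (hq : nonQA M) :
    ∃ f : ℝ → ℝ, ContDiff ℝ (⊤ : ℕ∞) f ∧ (∀ j, M j ≤ |iteratedDeriv j f 0|) ∧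
      (∀ x, 4 ≤ |x| → f x = 0) ∧
      ∃ L : ℝ, 1 ≤ L ∧ ∀ j x, |iteratedDeriv j f x| ≤ 4 * L ^ j * M j := by
  have hpos : ∀ k, 0 < M k / M (k + 1) := fun k => div_pos (hM.pos _) (hM.pos _)
  set S := ∑' k, M k / M (k + 1) with hS
  have hS0 : 0 ≤ S := tsum_nonneg fun k => (hpos k).le
  obtain ⟨φ, hφ, hφ1, hφ0, hφd⟩ := exists_cutoff (h := fun k => (1 + S)⁻¹ * (M k / M (k + 1)))
    (fun k => by have := hpos k; positivity) (Summable.mul_left _ hq) (by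
      rw [tsum_mul_left, ← hS, inv_mul_le_iff₀ (by positivity)]
      linarith)
  have hprod : ∀ j, ∏ k ∈ Finset.range j, ((1 + S)⁻¹ * (M k / M (k + 1)))⁻¹ =
      (1 + S) ^ j * M j := by
    intro j
    induction j with
    | zero => simp [hM.norm0]
    | succ j ih =>
      have h1 := (hM.pos j).ne'
      have h2 := (hM.pos (j + 1)).ne'
      rw [Finset.prod_range_succ, ih]
      field_simp
      ring
  obtain ⟨θ, hθ, hθ0, hθd⟩ := exists_characteristic hM
  refine ⟨fun x => φ x * θ x, hφ.mul hθ, fun j => ?_, fun x hx => by simp [hφ0 x hx],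
    1 + S + 2, by linarith, fun j x => ?_⟩
  · have : (fun x => φ x * θ x) =ᶠ[nhds 0] θ := by
      filter_upwards [Metric.ball_mem_nhds (0 : ℝ) one_pos] with x hx
      rw [hφ1 x (by simpa using (Metric.mem_ball.1 hx).le), one_mul]
    rw [this.iteratedDeriv_eq]
    exact hθ0 j
  · have h1 := norm_iteratedFDeriv_mul_le hφ hθ x (n := j) (by exact_mod_cast le_top)
    simp only [norm_iteratedFDeriv_eq_norm_iteratedDeriv, Real.norm_eq_abs] at h1
    refine h1.trans ?_
    calc ∑ i ∈ Finset.range (j + 1), (j.choose i : ℝ) * |iteratedDeriv i φ x| *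
          |iteratedDeriv (j - i) θ x|
        ≤ ∑ i ∈ Finset.range (j + 1),
            4 * M j * ((1 + S) ^ i * 2 ^ (j - i) * (j.choose i : ℝ)) := by
          refine Finset.sum_le_sum fun i hi => ?_
          have hij : i + (j - i) = j := by have := Finset.mem_range.1 hi; omega
          have h2 := hφd i x
          rw [hprod] at h2
          have h3 := hM.mul_le i (j - i)
          rw [hij] at h3
          have := hM.pos i
          calc _ ≤ (j.choose i : ℝ) * ((1 + S) ^ i * M i) * (4 * 2 ^ (j - i) * M (j - i)) := by
                gcongr
                exact hθd _ _
            _ = (j.choose i : ℝ) * (1 + S) ^ i * 4 * 2 ^ (j - i) * (M i * M (j - i)) := by ring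
            _ ≤ (j.choose i : ℝ) * (1 + S) ^ i * 4 * 2 ^ (j - i) * M j := by gcongr
            _ = _ := by ring
      _ = 4 * (1 + S + 2) ^ j * M j := by
          rw [← Finset.mul_sum, ← add_pow]
          ring

end LC

/-! ### Multi-indices in dimension one -/

theorem pderivOp_iterate_fin_one {f : ℝ → ℝ} (hf : ContDiff ℝ (⊤ : ℕ∞) f) (n : ℕ) :
    (pderivOp (0 : Fin 1))^[n] (fun x => f (x 0)) = fun x => iteratedDeriv n f (x 0) := by
  induction n with
  | zero => simp
  | succ n ih =>
    rw [Function.iterate_succ_apply', ih]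
    funext x
    have h1 : HasDerivAt (iteratedDeriv n f) (deriv (iteratedDeriv n f) (x 0)) (x 0) :=
      ((contDiff_infty_iff_deriv.1 (smooth_deriv hf n)).1 _).hasDerivAt
    have h2 : HasFDerivAt (fun y : Fin 1 → ℝ => y 0)
        (ContinuousLinearMap.proj (R := ℝ) (φ := fun _ : Fin 1 => ℝ) 0) x :=
      (ContinuousLinearMap.proj (R := ℝ) (φ := fun _ : Fin 1 => ℝ) 0).hasFDerivAt
    have h3 := h1.comp_hasFDerivAt x h2
    rw [pderivOp, show fderiv ℝ (fun y : Fin 1 → ℝ => iteratedDeriv n f (y 0)) x = _ from h3.fderiv,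
      iteratedDeriv_succ]
    simp

theorem mderiv_fin_one {f : ℝ → ℝ} (hf : ContDiff ℝ (⊤ : ℕ∞) f) (β : Fin 1 → ℕ)
    (x : Fin 1 → ℝ) : mderiv β (fun x => f (x 0)) x = iteratedDeriv (β 0) f (x 0) := by
  rw [mderiv]
  simp only [List.finRange_succ, List.finRange_zero, List.map_nil, List.foldr_cons, List.foldr_nil]
  rw [pderivOp_iterate_fin_one hf]

theorem mem_SRoumieuSeq_one {M : ℕ → ℝ} (hM : IsLC M) {f : ℝ → ℝ}
    (hf : ContDiff ℝ (⊤ : ℕ∞) f) (hf0 : ∀ x, 4 ≤ |x| → f x = 0) {L : ℝ} (hL : 1 ≤ L)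
    (hfd : ∀ j x, |iteratedDeriv j f x| ≤ 4 * L ^ j * M j) :
    (fun x : Fin 1 → ℝ => f (x 0)) ∈ SRoumieuSeq M 1 := by
  refine ⟨hf.comp (contDiff_apply ℝ ℝ 0), 4, by norm_num, 4 * L, by positivity, fun α β x => ?_⟩
  rw [mderiv_fin_one hf]
  simp only [mpow, msize, Finset.univ_unique, Fin.default_eq_zero, Finset.prod_singleton,
    Finset.sum_singleton]
  generalize α 0 = p, β 0 = q, x 0 = y
  have hMpq := hM.pos (p + q)
  rcases le_or_gt |y| 4 with hy | hy
  · have h1 : M q ≤ M (p + q) := by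
      have h2 := hM.mul_le p q
      have h3 := hM.one_le p
      have h4 := hM.pos q
      nlinarith
    have h4 := hM.pos q
    rw [abs_mul, abs_pow]
    calc |y| ^ p * |iteratedDeriv q f y| ≤ 4 ^ p * (4 * L ^ q * M q) := by
          gcongr
          exact hfd q y
      _ ≤ (4 * L) ^ p * (4 * (4 * L) ^ q * M (p + q)) := by
          gcongr
          · linarith
          · linarith
      _ = 4 * (4 * L) ^ (p + q) * M (p + q) := by ring
  · have h0 : f =ᶠ[nhds y] fun _ => 0 := by
      filter_upwards [(isOpen_lt continuous_const continuous_abs).mem_nhds hy] with z hz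
      exact hf0 z (le_of_lt hz)
    rw [h0.iteratedDeriv_eq]
    simp only [iteratedDeriv_fun_const_zero, mul_zero, abs_zero]
    positivity

/-! ### The relation `M ◁ N` -/

theorem seqLtriangle.bound {M N : ℕ → ℝ} (hM : ∀ p, 0 < M p) (hN : ∀ p, 0 < N p)
    (hMN : seqLtriangle M N) {ε : ℝ} (hε : 0 < ε) :
    ∃ C > 0, ∀ p, M p ≤ C * ε ^ p * N p := by
  have hev : ∀ᶠ p : ℕ in atTop, M p / (ε ^ p * N p) ≤ 1 := by
    filter_upwards [hMN.eventually (gt_mem_nhds hε), eventually_gt_atTop 0] with p hp hp0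
    have h1 : 0 ≤ M p / N p := (div_pos (hM p) (hN p)).le
    have h2 : M p / N p ≤ ε ^ p := by
      have := pow_le_pow_left₀ (Real.rpow_nonneg h1 _) hp.le p
      rwa [one_div, Real.rpow_inv_natCast_pow h1 hp0.ne'] at this
    have h3 := hN p
    rw [div_le_one (by positivity)]
    exact (div_le_iff₀ h3).1 h2
  obtain ⟨C, hC⟩ := (show IsBoundedUnder (· ≤ ·) atTop fun p => M p / (ε ^ p * N p) from
    isBoundedUnder_of_eventually_le hev).bddAbove_range
  refine ⟨max C 1, by positivity, fun p => ?_⟩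
  have h1 := hC ⟨p, rfl⟩
  have h3 := hN p
  have h2 := h1.trans (le_max_left C 1)
  rw [div_le_iff₀ (by positivity)] at h2
  linarith

theorem seqLtriangle_of_bound {M N : ℕ → ℝ} (hM : ∀ p, 0 < M p) (hN : ∀ p, 0 < N p)
    (h : ∀ ε > 0, ∃ C > 0, ∀ p, M p ≤ C * ε ^ p * N p) : seqLtriangle M N := by
  have h0 : ∀ p, 0 ≤ M p / N p := fun p => (div_pos (hM p) (hN p)).le
  refine tendsto_order.2 ⟨fun a ha => Eventually.of_forall fun p =>
    ha.trans_le (Real.rpow_nonneg (h0 p) _), fun ε hε => ?_⟩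
  obtain ⟨C, hC, hb⟩ := h (ε / 4) (by positivity)
  filter_upwards [(tendsto_pow_atTop_atTop_of_one_lt (r := (2 : ℝ)) (by norm_num)).eventually_ge_atTop C,
    eventually_gt_atTop 0] with p hp hp0
  have h1 : M p / N p ≤ (ε / 2) ^ p := by
    rw [div_le_iff₀ (hN p)]
    have h3 := hN p
    calc M p ≤ C * (ε / 4) ^ p * N p := hb p
      _ ≤ 2 ^ p * (ε / 4) ^ p * N p := by gcongr
      _ = (ε / 2) ^ p * N p := by rw [← mul_pow]; ring
  calc (M p / N p) ^ (1 / (p : ℝ)) ≤ ((ε / 2) ^ p) ^ (1 / (p : ℝ)) :=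
        Real.rpow_le_rpow (h0 p) h1 (by positivity)
    _ = ε / 2 := by rw [one_div, Real.pow_rpow_inv_natCast (by positivity) hp0.ne']
    _ < ε := by linarith

/-- Theorem `Gelfand-inclusion4` (I): for positive sequences `M, N`,
`M ◁ N` implies `S_{{M}}(ℝ^d) ⊆ S_(N)(ℝ^d)` for every `d`; conversely, if `M ∈ LC`
is non-quasianalytic and the inclusion holds in dimension `1`, then `M ◁ N`. -/
theorem roumieu_beurling_inclusion_nonquasianalytic_sequences (M N : ℕ → ℝ)
    (hMpos : ∀ p, 0 < M p) (hNpos : ∀ p, 0 < N p) :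
    (seqLtriangle M N → ∀ d : ℕ, 0 < d → SRoumieuSeq M d ⊆ SBeurlingSeq N d) ∧
    (IsLC M → nonQA M → SRoumieuSeq M 1 ⊆ SBeurlingSeq N 1 → seqLtriangle M N) := by
  constructor
  · rintro hMN d - f ⟨hf, C, hC, h, hh, hb⟩
    refine ⟨hf, fun k hk => ?_⟩
    obtain ⟨D, hD, hDb⟩ := hMN.bound hMpos hNpos (div_pos hk hh)
    refine ⟨C * D, by positivity, fun α β x => (hb α β x).trans ?_⟩
    generalize msize α + msize β = p
    calc C * h ^ p * M p ≤ C * h ^ p * (D * (k / h) ^ p * N p) := by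
          gcongr
          exact hDb p
      _ = C * D * (h * (k / h)) ^ p * N p := by rw [mul_pow]; ring
      _ = C * D * k ^ p * N p := by rw [mul_div_cancel₀ _ hh.ne']
  · intro hM hq hsub
    obtain ⟨f, hf, hlow, hf0, L, hL, hfd⟩ := exists_compact_characteristic hM hq
    obtain ⟨-, hbeur⟩ := hsub (mem_SRoumieuSeq_one hM hf hf0 hL hfd)
    refine seqLtriangle_of_bound hMpos hNpos fun ε hε => ?_
    obtain ⟨C, hC, hb⟩ := hbeur ε hε
    refine ⟨C, hC, fun p => (hlow p).trans ?_⟩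
    have := hb 0 (fun _ => p) 0
    rw [mderiv_fin_one hf] at this
    simpa [mpow, msize] using this
end
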